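/- arXiv:1612.01827 — 3 statements merged into one kernel-verified Lean document; each statement's English description precedes it below -/
import Mathlib

section
/- Let A be a Noetherian ring, B = A[Y]/I a finitely presented A-algebra with Y = (Y_1,…,Y_n), and B₁ = S_B(I/I²) the symmetric algebra of the conormal module I/I² over B. Then H_{B/A}·B₁ ⊆ H_{B₁/A}, and for every γ ∈ H_{B/A} the localization (Ω_{B₁/A})_γ of the module of Kähler differentials of B₁ over A is a free module over the localization (B₁)_γ. -/
open MvPolynomial

universe u v

/-- The ideal `Δ_f` generated by all `r × r` minors of the Jacobian matrix `(∂f_i/∂Y_j)`. -/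
noncomputable def jacobiDelta {A : Type*} [CommRing A] {σ : Type*} {r : ℕ}
    (f : Fin r → MvPolynomial σ A) : Ideal (MvPolynomial σ A) :=
  Ideal.span { m | ∃ c : Fin r → σ, Function.Injective c ∧
    m = Matrix.det (Matrix.of fun i j : Fin r => MvPolynomial.pderiv (c j) (f i)) }

/-- The ideal `Σ_f ((f) : I)·Δ_f` of `A[Y]`, the sum being over all systems
`f = (f₁, …, f_r)` of polynomials from `I` with `r ≤ n`. -/
noncomputable def preHIdeal {A : Type*} [CommRing A] {n : ℕ} {σ : Type*} (e : σ ≃ Fin n)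
    (I : Ideal (MvPolynomial σ A)) : Ideal (MvPolynomial σ A) :=
  ⨆ (r : ℕ) (_ : r ≤ n) (f : Fin r → MvPolynomial σ A) (_ : ∀ i, f i ∈ I),
    (Submodule.colon (Ideal.span (Set.range f)) I) * jacobiDelta f

/-- The ideal `H_{B/A} ⊆ B` for `B = A[Y]/I`: the radical of the image of
`Σ_f ((f) : I)·Δ_f`. -/
noncomputable def HIdeal {A : Type*} [CommRing A] {n : ℕ} {σ : Type*} (e : σ ≃ Fin n)
    (I : Ideal (MvPolynomial σ A)) : Ideal (MvPolynomial σ A ⧸ I) :=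
  (Ideal.map (Ideal.Quotient.mk I) (preHIdeal e I)).radical

variable {A : Type u} [CommRing A] {n N m : ℕ}

/-- The ideal of `A[Y, T]` presenting the symmetric algebra `S_B(I/I²)` of a `B`-module
with presentation matrix `(a_{ij})`: it is generated by (the lift of) `I` together with
the linear forms `Σ_i a_{ij}·T_i`, `j = 1, …, m`. -/
noncomputable def symIdeal (I : Ideal (MvPolynomial (Fin n) A))
    (a : Fin N → Fin m → MvPolynomial (Fin n) A) :
    Ideal (MvPolynomial (Fin n ⊕ Fin N) A) :=
  Ideal.map (MvPolynomial.rename Sum.inl) I ⊔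
    Ideal.span (Set.range fun j : Fin m =>
      ∑ i : Fin N, MvPolynomial.rename Sum.inl (a i j) * MvPolynomial.X (Sum.inr i))

lemma map_le_symIdeal (I : Ideal (MvPolynomial (Fin n) A))
    (a : Fin N → Fin m → MvPolynomial (Fin n) A) :
    Ideal.map (MvPolynomial.rename Sum.inl) I ≤ symIdeal I a := by
  unfold symIdeal; exact le_sup_left

/-- The canonical map `B = A[Y]/I → B₁ = S_B(I/I²) = A[Y,T]/I₁`. -/
noncomputable def symMap (I : Ideal (MvPolynomial (Fin n) A))
    (a : Fin N → Fin m → MvPolynomial (Fin n) A) :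
    (MvPolynomial (Fin n) A ⧸ I) →+* (MvPolynomial (Fin n ⊕ Fin N) A ⧸ symIdeal I a) :=
  Ideal.quotientMap (symIdeal I a) (MvPolynomial.rename Sum.inl).toRingHom
    (Ideal.map_le_iff_le_comap.mp (map_le_symIdeal I a))

/-!
Write `d : I/I² → ⊕ B dYⱼ` for the cotangent complex of `B = A[Y]/I`. If `f₁, …, fᵣ ∈ I` and `h`
multiplies `I` into `(f)`, Cramer's rule turns every `r × r` Jacobian minor `δ` into a linear map
`s` with `s ∘ d = hδ`; hence a power of each `γ ∈ H_{B/A}` is such a factor, and `d` splits over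
every localization in which `γ` is a unit. This splitting means that `A → B_γ` is formally smooth.
Conversely, if `B_γ` is formally smooth over `A`, then at each prime not containing `γ` the map
`d` stays injective over the residue field, and Nakayama's lemma produces `h` and `δ` outside that
prime: this is the Jacobian criterion.

Over `B_γ` the conormal module becomes projective, so its symmetric algebra `(B₁)_γ` is formally
smooth over `B_γ`, hence over `A`, and the criterion applies to `B₁`. The exact sequence of
differentials of `A → B → B₁` then splits after inverting `γ`, and `Ω_{B₁/B} = B₁ ⊗ I/I²`, so
`Ω_{B₁/A} ≅ B₁ ⊗ (Ω_{B/A} ⊕ I/I²) ≅ ⊕ B₁ dYⱼ` there, using the splitting of `d` once more.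
-/

open TensorProduct KaehlerDifferential Algebra

section RetractionIdeal

variable {B M V : Type*} [CommRing B] [AddCommGroup M] [Module B M] [AddCommGroup V] [Module B V]

/-- The ideal of those scalars `b` for which the linear map `d` has a retraction up to the
factor `b`. -/
def retractionIdeal (d : M →ₗ[B] V) : Ideal B where
  carrier := {b | ∃ s : V →ₗ[B] M, s ∘ₗ d = b • LinearMap.id}
  add_mem' := by
    rintro b c ⟨s, hs⟩ ⟨t, ht⟩
    exact ⟨s + t, by rw [LinearMap.add_comp, hs, ht, add_smul]⟩
  zero_mem' := ⟨0, by simp⟩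
  smul_mem' := by
    rintro c b ⟨s, hs⟩
    exact ⟨c • s, by rw [LinearMap.smul_comp, hs, smul_smul, smul_eq_mul]⟩

theorem mem_retractionIdeal {d : M →ₗ[B] V} {b : B} :
    b ∈ retractionIdeal d ↔ ∃ s : V →ₗ[B] M, s ∘ₗ d = b • LinearMap.id :=
  Iff.rfl

theorem mul_det_mem_retractionIdeal {ι : Type*} [Fintype ι] [DecidableEq ι] (d : M →ₗ[B] V)
    (f : ι → M) (p : ι → Module.Dual B V) {h : B}
    (hf : ∀ x, h • x ∈ Submodule.span B (Set.range f)) :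
    h * (Matrix.of fun i j => p j (d (f i))).det ∈ retractionIdeal d := by
  set J := Matrix.of fun i j => p j (d (f i))
  set F := Fintype.linearCombination B f
  have pi_apply (u : ι → B) : LinearMap.pi p (d (F u)) = Matrix.vecMul u J := by
    ext j
    simp [F, J, Fintype.linearCombination_apply, Matrix.vecMul, dotProduct]
  refine mem_retractionIdeal.2
    ⟨h • F ∘ₗ J.adjugate.vecMulLinear ∘ₗ LinearMap.pi p, LinearMap.ext fun x => ?_⟩
  obtain ⟨u, hu⟩ : ∃ u, F u = h • x := by
    simpa only [← Fintype.range_linearCombination, LinearMap.mem_range] using hf x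
  calc h • F (J.adjugate.vecMulLinear (LinearMap.pi p (d x)))
      = F (J.adjugate.vecMulLinear (LinearMap.pi p (d (F u)))) := by simp only [hu, map_smul]
    _ = F (J.det • u) := by
        rw [pi_apply, Matrix.vecMulLinear_apply, Matrix.vecMul_vecMul, Matrix.mul_adjugate,
          Matrix.vecMul_smul, Matrix.vecMul_one]
    _ = (h * J.det) • x := by rw [map_smul, hu, smul_smul, mul_comm]

variable {R : Type*} [CommRing R] [Algebra B R]

theorem exists_baseChange_retraction_of_mem_retractionIdeal {d : M →ₗ[B] V} {b : B}
    (hb : b ∈ retractionIdeal d) (hbR : IsUnit (algebraMap B R b)) :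
    ∃ r, r ∘ₗ d.baseChange R = LinearMap.id := by
  obtain ⟨s, hs⟩ := hb
  refine ⟨(↑hbR.unit⁻¹ : R) • s.baseChange R, ?_⟩
  rw [LinearMap.smul_comp, ← LinearMap.baseChange_comp, hs]
  ext x
  simp only [AlgebraTensorModule.curry_apply, curry_apply, LinearMap.coe_restrictScalars,
    LinearMap.smul_apply, LinearMap.baseChange_tmul, LinearMap.id_apply, tmul_smul]
  rw [← algebraMap_smul R b, smul_smul, IsUnit.val_inv_mul, one_smul]

theorem baseChange_injective_of_retraction {K : Type*} [CommRing K] [Algebra B K] [Algebra R K]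
    [IsScalarTower B R K] {d : M →ₗ[B] V} {r} (hr : r ∘ₗ d.baseChange R = LinearMap.id) :
    Function.Injective (d.baseChange K) := by
  have retraction : r.baseChange K ∘ₗ (d.baseChange R).baseChange K = LinearMap.id := by
    rw [← LinearMap.baseChange_comp, hr, LinearMap.baseChange_id]
  have comm : d.baseChange K ∘ₗ (AlgebraTensorModule.cancelBaseChange B R K K M).toLinearMap =
      (AlgebraTensorModule.cancelBaseChange B R K K V).toLinearMap ∘ₗ
        (d.baseChange R).baseChange K := by
    ext
    simp
  refine Function.Injective.of_comp_right (g := AlgebraTensorModule.cancelBaseChange B R K K M) ?_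
    (AlgebraTensorModule.cancelBaseChange B R K K M).surjective
  rw [show ⇑(d.baseChange K) ∘ AlgebraTensorModule.cancelBaseChange B R K K M = _ from
    congrArg DFunLike.coe comm]
  exact (AlgebraTensorModule.cancelBaseChange B R K K V).injective.comp
    (LinearMap.injective_of_comp_eq_id _ _ retraction)

end RetractionIdeal

theorem injective_iff_subsingleton_of_exact {R M N P : Type*} [Ring R] [AddCommGroup M]
    [AddCommGroup N] [AddCommGroup P] [Module R M] [Module R N] [Module R P] {f : M →ₗ[R] N}
    {g : N →ₗ[R] P} (hf : Function.Injective f) (hfg : Function.Exact f g) :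
    Function.Injective g ↔ Subsingleton M := by
  rw [← LinearMap.ker_eq_bot, LinearMap.exact_iff.1 hfg, ← Submodule.subsingleton_iff_eq_bot,
    (LinearEquiv.ofInjective f hf).subsingleton_congr]

section Localization

variable {k S L : Type*} [CommRing k] [CommRing S] [Algebra k S] [CommRing L] [Algebra k L]
  [Algebra S L] [IsScalarTower k S L]

theorem baseChange_cotangentComplex_injective_iff (W : Submonoid S) [IsLocalization W L]
    (P : Extension k S) [FormallySmooth k P.Ring] :
    Function.Injective (P.cotangentComplex.baseChange L) ↔ Subsingleton (H1Cotangent k L) := by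
  have : Module.Flat S L := IsLocalization.flat L W
  rw [← ((P.equivH1CotangentOfFormallySmooth.baseChange S L _ _).trans
    (tensorH1CotangentOfIsLocalization k L W)).subsingleton_congr]
  exact injective_iff_subsingleton_of_exact (f := P.h1Cotangentι.baseChange L)
    (Module.Flat.lTensor_preserves_injective_linearMap _ P.h1Cotangentι_injective)
    (Module.Flat.lTensor_exact L P.exact_hCotangentι_cotangentComplex)

theorem formallySmooth_iff_baseChange_split_injection (W : Submonoid S) [IsLocalization W L]
    (P : Extension k S) [FormallySmooth k P.Ring] :
    FormallySmooth k L ↔ ∃ r, r ∘ₗ P.cotangentComplex.baseChange L = LinearMap.id := by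
  have : FormallyEtale S L := .of_isLocalization W
  have exact_toKaehler : Function.Exact (P.cotangentComplex.baseChange L)
      (P.toKaehler.baseChange L) :=
    lTensor_exact L P.exact_cotangentComplex_toKaehler P.toKaehler_surjective
  have toKaehler_surjective : Function.Surjective (P.toKaehler.baseChange L) :=
    LinearMap.lTensor_surjective L P.toKaehler_surjective
  have projective_iff : Module.Projective L Ω[L⁄k] ↔ Module.Projective L (L ⊗[S] Ω[S⁄k]) :=
    ⟨fun _ => .of_equiv' (tensorKaehlerEquivOfFormallyEtale k S L).symm,
      fun _ => .of_equiv' (tensorKaehlerEquivOfFormallyEtale k S L)⟩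
  rw [formallySmooth_iff, and_comm, ← baseChange_cotangentComplex_injective_iff W P,
    projective_iff, Module.Projective.iff_split_of_projective _ toKaehler_surjective]
  exact (exact_toKaehler.split_tfae'.out 0 1).trans (and_iff_right toKaehler_surjective)

end Localization

section SymmetricAlgebra

variable {B M S : Type*} [CommRing B] [AddCommGroup M] [Module B M] [CommRing S] [Algebra B S]
  {f : M →ₗ[B] S}

theorem isSymmetricAlgebra_of_algHom (g : S →ₐ[B] SymmetricAlgebra B M)
    (hg : g.toLinearMap ∘ₗ f = SymmetricAlgebra.ι B M)
    (hfg : (SymmetricAlgebra.lift f).comp g = .id B S) : IsSymmetricAlgebra f := by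
  have hgf : g.comp (SymmetricAlgebra.lift f) = .id B _ :=
    SymmetricAlgebra.algHom_ext (by ext x; simpa using LinearMap.congr_fun hg x)
  exact Function.bijective_iff_has_inverse.2
    ⟨g, DFunLike.congr_fun hgf, DFunLike.congr_fun hfg⟩

theorem exists_lift_of_mem_retractionIdeal {C V : Type*} [CommRing C] [Algebra B C]
    [AddCommGroup V] [Module B V] [Module.Projective B V] {d : M →ₗ[B] V} {b : B}
    (hb : b ∈ retractionIdeal d) (K : Ideal C) (hbC : IsUnit (algebraMap B C b))
    (g : M →ₗ[B] C ⧸ K) :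
    ∃ g' : M →ₗ[B] C, (Ideal.Quotient.mkₐ B K).toLinearMap ∘ₗ g' = g := by
  obtain ⟨s, hs⟩ := hb
  obtain ⟨t, ht⟩ := Module.projective_lifting_property (Ideal.Quotient.mkₐ B K).toLinearMap
    (g ∘ₗ s) (Ideal.Quotient.mkₐ_surjective B K)
  refine ⟨LinearMap.mulLeft B (↑hbC.unit⁻¹ : C) ∘ₗ t ∘ₗ d, LinearMap.ext fun x => ?_⟩
  have hsx : s (d x) = b • x := LinearMap.congr_fun hs x
  have htx : Ideal.Quotient.mk K (t (d x)) = b • g x := by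
    simpa [hsx] using LinearMap.congr_fun ht (d x)
  calc Ideal.Quotient.mk K (↑hbC.unit⁻¹ * t (d x))
      = Ideal.Quotient.mk K (↑hbC.unit⁻¹ * algebraMap B C b) * g x := by
        rw [map_mul, htx, map_mul, mul_assoc, Algebra.smul_def]; rfl
    _ = g x := by rw [IsUnit.val_inv_mul, map_one, one_mul]

theorem formallySmooth_of_isSymmetricAlgebra (hf : IsSymmetricAlgebra f) {V R : Type*}
    [AddCommGroup V] [Module B V] [Module.Projective B V] [CommRing R] [Algebra B R] [Algebra S R]
    [IsScalarTower B S R] (W : Submonoid S) [IsLocalization W R] {d : M →ₗ[B] V} {b : B}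
    (hb : b ∈ retractionIdeal d) (hbR : IsUnit (algebraMap B R b)) :
    FormallySmooth B R := by
  refine .of_comp_surjective fun C _ _ K hK g => ?_
  have isUnit_of_isUnit_mk {c : C} (hc : IsUnit (Ideal.Quotient.mk K c)) : IsUnit c :=
    (IsNilpotent.isUnit_quotient_mk_iff ⟨2, hK⟩).1 hc
  have hbC : IsUnit (algebraMap B C b) := isUnit_of_isUnit_mk (by simpa using hbR.map g)
  let gS : S →ₐ[B] C ⧸ K := g.comp (IsScalarTower.toAlgHom B S R)
  obtain ⟨t, ht⟩ := exists_lift_of_mem_retractionIdeal hb K hbC (gS.toLinearMap ∘ₗ f)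
  have mk_lift : (Ideal.Quotient.mkₐ B K).comp (hf.lift t) = gS := hf.algHom_ext <| by
    ext x; simpa using LinearMap.congr_fun ht x
  have isUnit_lift (w : W) : IsUnit (hf.lift t w) := by
    refine isUnit_of_isUnit_mk ?_
    rw [show Ideal.Quotient.mk K (hf.lift t w) = g (algebraMap S R w) from
      DFunLike.congr_fun mk_lift (w : S)]
    exact (IsLocalization.map_units R w).map g
  refine ⟨IsLocalization.liftAlgHom (M := W) (f := hf.lift t) isUnit_lift, ?_⟩
  refine IsLocalization.algHom_ext W (Eq.trans ?_ mk_lift)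
  exact AlgHom.ext fun x => congr_arg (Ideal.Quotient.mk K) (IsLocalization.lift_eq _ x)

theorem exists_derivation_of_isSymmetricAlgebra (hf : IsSymmetricAlgebra f) {N : Type*}
    [AddCommGroup N] [Module B N] [Module S N] [IsScalarTower B S N] (g : M →ₗ[B] N) :
    ∃ δ : Derivation B S N, ∀ x, δ (f x) = g x := by
  let : Module Sᵐᵒᵖ N := Module.compHom N ((RingHom.id S).fromOpposite mul_comm)
  have : IsCentralScalar S N := ⟨fun _ _ => rfl⟩
  let : Module Bᵐᵒᵖ N := Module.compHom N ((RingHom.id B).fromOpposite mul_comm)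
  -- A derivation `S → N` is the second component of a section of `S ⊕ Nε → S`.
  let φ : S →ₐ[B] TrivSqZeroExt S N :=
    hf.lift ((TrivSqZeroExt.inlAlgHom B S N).toLinearMap ∘ₗ f +
      (TrivSqZeroExt.inrHom S N).restrictScalars B ∘ₗ g)
  have fst_φ (s : S) : (φ s).fst = s :=
    DFunLike.congr_fun (hf.algHom_ext (F := (TrivSqZeroExt.fstHom B S N).comp φ)
      (G := AlgHom.id B S) (by ext x; simp [φ])) s
  refine ⟨Derivation.mk' ((TrivSqZeroExt.sndHom S N).restrictScalars B ∘ₗ φ.toLinearMap)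
    fun a b => ?_, fun x => ?_⟩
  · simp [fst_φ]
  · simp [φ]

theorem derivation_ext_of_isSymmetricAlgebra (hf : IsSymmetricAlgebra f) {N : Type*}
    [AddCommGroup N] [Module B N] [Module S N] {δ₁ δ₂ : Derivation B S N}
    (h : ∀ x, δ₁ (f x) = δ₂ (f x)) : δ₁ = δ₂ := by
  ext s
  induction s using hf.induction with
  | algebraMap b => simp
  | ι x => exact h x
  | mul a b ha hb => simp [ha, hb]
  | add a b ha hb => simp [ha, hb]

theorem liftBaseChange_D_bijective (hf : IsSymmetricAlgebra f) :
    Function.Bijective (((D B S).toLinearMap ∘ₗ f).liftBaseChange S) := by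
  obtain ⟨δ, hδ⟩ := exists_derivation_of_isSymmetricAlgebra hf (TensorProduct.mk B S M 1)
  set μ := ((D B S).toLinearMap ∘ₗ f).liftBaseChange S
  refine Function.bijective_iff_has_inverse.2 ⟨δ.liftKaehlerDifferential, ?_, ?_⟩
  · suffices h : δ.liftKaehlerDifferential ∘ₗ μ = LinearMap.id from LinearMap.congr_fun h
    ext x
    simp [μ, hδ]
  · suffices h : μ ∘ₗ δ.liftKaehlerDifferential = LinearMap.id from LinearMap.congr_fun h
    exact Derivation.liftKaehlerDifferential_unique _ _
      (derivation_ext_of_isSymmetricAlgebra hf fun x => by simp [μ, hδ])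

end SymmetricAlgebra

section Kaehler

variable {k B S R : Type*} [CommRing k] [CommRing B] [Algebra k B] [CommRing S] [Algebra B S]
  [CommRing R] [Algebra k R] [Algebra B R] [Algebra S R] [IsScalarTower k B R]

variable (k B R) in
theorem nonempty_kaehler_equiv_prod [FormallySmooth B R] :
    Nonempty (Ω[R⁄k] ≃ₗ[R] (R ⊗[B] Ω[B⁄k]) × Ω[R⁄B]) := by
  have injective : Function.Injective (mapBaseChange k B R) := by
    refine (injective_iff_map_eq_zero _).2 fun x hx => ?_
    obtain ⟨y, rfl⟩ := (H1Cotangent.exact_δ_mapBaseChange k B R x).1 hx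
    rw [Subsingleton.elim y 0, map_zero]
  obtain ⟨l, hl⟩ := Module.projective_lifting_property (KaehlerDifferential.map k B R R)
    LinearMap.id (KaehlerDifferential.map_surjective k B R)
  exact ⟨((exact_mapBaseChange_map k B R).splitSurjectiveEquiv injective ⟨l, hl⟩).1⟩

theorem nonempty_kaehler_equiv_baseChange_cotangentSpace [IsScalarTower B S R]
    (P : Extension k B) {f : P.Cotangent →ₗ[B] S} (hf : IsSymmetricAlgebra f) (W : Submonoid S)
    [IsLocalization W R] [FormallySmooth B R] {r}
    (hr : r ∘ₗ P.cotangentComplex.baseChange R = LinearMap.id) :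
    Nonempty (Ω[R⁄k] ≃ₗ[R] R ⊗[B] P.CotangentSpace) := by
  have : FormallyEtale S R := .of_isLocalization W
  have exact_toKaehler : Function.Exact (P.cotangentComplex.baseChange R)
      (P.toKaehler.baseChange R) :=
    lTensor_exact R P.exact_cotangentComplex_toKaehler P.toKaehler_surjective
  have split_cotangentSpace := (exact_toKaehler.splitInjectiveEquiv
    (LinearMap.lTensor_surjective R P.toKaehler_surjective) ⟨r, hr⟩).1
  have kaehler_fiber : R ⊗[B] P.Cotangent ≃ₗ[R] Ω[R⁄B] :=
    (AlgebraTensorModule.cancelBaseChange B S R R P.Cotangent).symm ≪≫ₗ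
      (LinearEquiv.ofBijective _ (liftBaseChange_D_bijective hf)).baseChange S R _ _ ≪≫ₗ
      tensorKaehlerEquivOfFormallyEtale B S R
  obtain ⟨split_kaehler⟩ := nonempty_kaehler_equiv_prod k B R
  exact ⟨split_kaehler ≪≫ₗ (LinearEquiv.refl R _).prodCongr kaehler_fiber.symm ≪≫ₗ
    LinearEquiv.prodComm R _ _ ≪≫ₗ split_cotangentSpace.symm⟩

theorem free_of_isLocalizedModule_kaehlerDifferential [Algebra k S] [IsScalarTower k S R]
    [Module.Free R Ω[R⁄k]] {Ω' : Type*} [AddCommGroup Ω'] [Module S Ω'] [Module R Ω']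
    [IsScalarTower S R Ω'] (W : Submonoid S) [IsLocalization W R] (l : Ω[S⁄k] →ₗ[S] Ω')
    [IsLocalizedModule W l] : Module.Free R Ω' :=
  .of_equiv <|
    (IsLocalizedModule.isBaseChange W R (KaehlerDifferential.map k k S R)).equiv.symm ≪≫ₗ
      (IsLocalizedModule.isBaseChange W R l).equiv

end Kaehler

section Minors

theorem exists_minor_ne_zero {K σ : Type*} [Field K] [Finite σ] {r : ℕ} {w : Fin r → σ → K}
    (hw : LinearIndependent K w) :
    ∃ c : Fin r → σ, Function.Injective c ∧ (Matrix.of fun i j => w i (c j)).det ≠ 0 := by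
  have := Fintype.ofFinite σ
  let W : Matrix (Fin r) σ K := Matrix.of w
  have rank_eq : W.rank = r := by simpa using LinearIndependent.rank_matrix (M := W) hw
  obtain ⟨κ, a, ha, span_eq, indep⟩ := exists_linearIndependent' K W.col
  have := Fintype.ofInjective a ha
  have card_eq : Fintype.card κ = r := by
    rw [← finrank_span_eq_card indep, span_eq, ← Matrix.rank_eq_finrank_span_cols, rank_eq]
  let e : Fin r ≃ κ := (Fintype.equivFinOfCardEq card_eq).symm
  have isUnit : IsUnit (Matrix.of fun i j => w i (a (e j))) :=
    Matrix.linearIndependent_cols_iff_isUnit.1 (indep.comp e e.injective)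
  exact ⟨a ∘ e, ha.comp e.injective, ((Matrix.isUnit_iff_isUnit_det _).1 isUnit).ne_zero⟩

variable {B M σ : Type*} [CommRing B] [AddCommGroup M] [Module B M]

theorem exists_fin_one_tmul_linearIndependent (B M K : Type*) [CommRing B] [AddCommGroup M]
    [Module B M] [Module.Finite B M] [Field K] [Algebra B K] :
    ∃ (r : ℕ) (f : Fin r → M), LinearIndependent K (fun i => (1 : K) ⊗ₜ[B] f i) ∧
      Submodule.span K (Set.range fun i => (1 : K) ⊗ₜ[B] f i) = ⊤ := by
  obtain ⟨κ, a, -, span_eq, indep⟩ := exists_linearIndependent' K (TensorProduct.mk B K M 1)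
  have := indep.finite
  obtain ⟨r, ⟨e⟩⟩ := Finite.exists_equiv_fin κ
  refine ⟨r, a ∘ e.symm, indep.comp e.symm e.symm.injective, ?_⟩
  have span_mk := Submodule.baseChange_span (R := B) (A := K) (Set.univ : Set M)
  rw [Submodule.span_univ, Submodule.baseChange_top, Set.image_univ, ← span_eq,
    ← e.symm.surjective.range_comp] at span_mk
  exact span_mk.symm

theorem subsingleton_tensorProduct_quotient_span {K ι : Type*} [CommRing K] [Algebra B K]
    {f : ι → M} (hf : Submodule.span K (Set.range fun i => (1 : K) ⊗ₜ[B] f i) = ⊤) :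
    Subsingleton (K ⊗[B] (M ⧸ Submodule.span B (Set.range f))) := by
  set N := Submodule.span B (Set.range f)
  have mkQ_surjective : Function.Surjective (N.mkQ.baseChange K) :=
    LinearMap.lTensor_surjective K N.mkQ_surjective
  have mkQ_eq_zero : N.mkQ.baseChange K = 0 := by
    refine LinearMap.ext_on_range hf fun i => ?_
    rw [LinearMap.baseChange_tmul, Submodule.mkQ_apply,
      (Submodule.Quotient.mk_eq_zero N).2 (Submodule.subset_span ⟨i, rfl⟩), tmul_zero,
      LinearMap.zero_apply]
  refine subsingleton_of_forall_eq 0 fun y => ?_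
  obtain ⟨x, rfl⟩ := mkQ_surjective y
  rw [mkQ_eq_zero, LinearMap.zero_apply]

theorem exists_mem_annihilator_algebraMap_ne_zero {K : Type*} [Field K] [Algebra B K]
    [Module.Finite B M] (h : Subsingleton (K ⊗[B] M)) :
    ∃ s ∈ Module.annihilator B M, algebraMap B K s ≠ 0 := by
  set Q : Ideal B := RingHom.ker (algebraMap B K)
  have isPrime : Q.IsPrime := RingHom.ker_isPrime _
  let κ := Q.ResidueField
  let : Algebra κ K := (Ideal.ResidueField.lift Q (algebraMap B K) le_rfl
    fun _ hs => (Ne.isUnit hs :)).toAlgebra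
  have : IsScalarTower B κ K := .of_algebraMap_eq fun b =>
    (Ideal.ResidueField.lift_algebraMap ..).symm
  have subsingleton_fiber : Subsingleton (κ ⊗[B] M) := by
    rw [← (AlgebraTensorModule.cancelBaseChange B κ K K M).subsingleton_congr] at h
    exact Module.FaithfullyFlat.lTensor_reflects_triviality κ K _
  have hQ : ⟨Q, isPrime⟩ ∉ Module.support B M := by
    rwa [Module.mem_support_iff_nontrivial_residueField_tensorProduct,
      not_nontrivial_iff_subsingleton]
  rw [Module.support_eq_zeroLocus, PrimeSpectrum.mem_zeroLocus, Set.not_subset] at hQ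
  exact hQ

theorem exists_smul_mem_span_and_minor_ne_zero {K : Type*} [Field K] [Algebra B K]
    [Module.Finite B M] [Finite σ] {d : K ⊗[B] M →ₗ[K] σ → K} (hd : Function.Injective d) :
    ∃ (r : ℕ) (f : Fin r → M) (c : Fin r → σ) (h : B), Function.Injective c ∧
      algebraMap B K h ≠ 0 ∧ (∀ x, h • x ∈ Submodule.span B (Set.range f)) ∧
      (Matrix.of fun i j => d (1 ⊗ₜ f i) (c j)).det ≠ 0 := by
  obtain ⟨r, f, indep, span_eq_top⟩ := exists_fin_one_tmul_linearIndependent B M K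
  obtain ⟨c, hc, det_ne_zero⟩ := exists_minor_ne_zero (indep.map' d (LinearMap.ker_eq_bot.2 hd))
  obtain ⟨h, h_annihilates, hK⟩ := exists_mem_annihilator_algebraMap_ne_zero
    (subsingleton_tensorProduct_quotient_span span_eq_top)
  refine ⟨r, f, c, h, hc, hK, fun x => ?_, det_ne_zero⟩
  rw [← Submodule.Quotient.mk_eq_zero, Submodule.Quotient.mk_smul]
  exact Module.mem_annihilator.1 h_annihilates _

end Minors

section CotangentMinors

theorem mem_colon_span_range_iff {P ι : Type*} [CommRing P] {I : Ideal P} {f : ι → I} {h : P} :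
    h ∈ (Ideal.span (Set.range fun i => (f i : P))).colon I ↔
      ∀ g : I, h • g ∈ Submodule.span P (Set.range f) := by
  have map_span : (Submodule.span P (Set.range f)).map I.subtype =
      Ideal.span (Set.range fun i => (f i : P)) := by
    rw [Submodule.map_span, ← Set.range_comp]; rfl
  simp only [Submodule.mem_colon, ← map_span, SetLike.mem_coe, Subtype.forall]
  refine forall₂_congr fun g hg => ?_
  exact Function.Injective.mem_set_image (s := (Submodule.span P (Set.range f) : Set I))
    I.injective_subtype (a := h • ⟨g, hg⟩)

variable {k S : Type*} [CommRing k] [CommRing S] [Algebra k S] {P : Extension k S}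

theorem algebraMap_smul_mem_span_range_mk {ι : Type*} {f : ι → P.ker} {h : P.Ring}
    (hf : h ∈ (Ideal.span (Set.range fun i => (f i : P.Ring))).colon P.ker) (x : P.Cotangent) :
    algebraMap P.Ring S h • x ∈
      Submodule.span S (Set.range fun i => Extension.Cotangent.mk (f i)) := by
  obtain ⟨g, rfl⟩ := Extension.Cotangent.mk_surjective x
  have mem := Submodule.mem_map_of_mem (f := Extension.Cotangent.mk)
    (mem_colon_span_range_iff.1 hf g)
  rw [Submodule.map_span, ← Set.range_comp, map_smul, ← algebraMap_smul S h] at mem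
  exact Submodule.span_le_restrictScalars P.Ring S _ mem

theorem exists_mem_colon_and_minor_ne_zero {σ K : Type*} [Finite σ] [Field K] [Algebra S K]
    (hP : P.ker.FG) (v : Module.Basis σ S P.CotangentSpace)
    (hd : Function.Injective (P.cotangentComplex.baseChange K)) :
    ∃ (r : ℕ) (f : Fin r → P.ker) (c : Fin r → σ) (h : P.Ring), Function.Injective c ∧
      h ∈ (Ideal.span (Set.range fun i => (f i : P.Ring))).colon P.ker ∧
      algebraMap S K (algebraMap P.Ring S h *
        (Matrix.of fun i j => v.repr (P.cotangentComplex (.mk (f i))) (c j)).det) ≠ 0 := by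
  have : Module.Finite P.Ring P.ker := .of_fg hP
  let : Algebra P.Ring K := Algebra.compHom K (algebraMap P.Ring S)
  have : IsScalarTower P.Ring S K := .of_algebraMap_eq fun _ => rfl
  let fiberEquiv : K ⊗[P.Ring] P.ker ≃ₗ[K] K ⊗[S] P.Cotangent :=
    (AlgebraTensorModule.cancelBaseChange P.Ring S K K P.ker).symm ≪≫ₗ
      P.cotangentEquiv.baseChange S K _ _
  let d : K ⊗[P.Ring] P.ker →ₗ[K] σ → K :=
    (v.baseChange K).equivFun.toLinearMap ∘ₗ P.cotangentComplex.baseChange K ∘ₗ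
      fiberEquiv.toLinearMap
  have d_injective : Function.Injective d :=
    (v.baseChange K).equivFun.injective.comp (hd.comp fiberEquiv.injective)
  have d_tmul (g : P.ker) (j : σ) :
      d (1 ⊗ₜ g) j = algebraMap S K (v.repr (P.cotangentComplex (.mk g)) j) := by
    simp [d, fiberEquiv, Module.Basis.baseChange_repr_tmul, Algebra.smul_def]
  obtain ⟨r, f, c, h, hc, h_ne_zero, hf, det_ne_zero⟩ :=
    exists_smul_mem_span_and_minor_ne_zero d_injective
  refine ⟨r, f, c, h, hc, mem_colon_span_range_iff.2 hf, ?_⟩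
  rw [map_mul, RingHom.map_det]
  refine mul_ne_zero h_ne_zero ?_
  simp only [d_tmul] at det_ne_zero
  exact det_ne_zero

end CotangentMinors

section Presentation

variable {σ : Type*} (I : Ideal (MvPolynomial σ A))

/-- The generators of `A[Y]/I` given by the classes of the variables. -/
noncomputable abbrev quotientGenerators : Generators A (MvPolynomial σ A ⧸ I) σ :=
  .naive

/-- The extension of `A[Y]/I` by `A[Y]`; its cotangent complex is the map `I/I² → ⊕ B dYⱼ`. -/
noncomputable abbrev quotientExtension : Extension A (MvPolynomial σ A ⧸ I) :=
  (quotientGenerators I).toExtension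

instance : FormallySmooth A (quotientExtension I).Ring :=
  inferInstanceAs (FormallySmooth A (MvPolynomial σ A))

variable {I}

theorem ker_quotientExtension : (quotientExtension I).ker = I :=
  Generators.ker_naive _ _

variable (I) in
theorem nonempty_cotangent_equiv_quotientExtension :
    Nonempty (I.Cotangent ≃ₗ[MvPolynomial σ A ⧸ I] (quotientExtension I).Cotangent) := by
  let e : I.Cotangent ≃+ (quotientExtension I).Cotangent :=
    (Ideal.Cotangent.equivOfEq I (quotientGenerators I).ker
      ker_quotientExtension.symm).toAddEquiv.trans
      (quotientExtension I).cotangentEquivCotangentKer.symm.toAddEquiv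
  refine ⟨e.toLinearEquiv fun b x => ?_⟩
  obtain ⟨p, rfl⟩ := Ideal.Quotient.mk_surjective b
  obtain ⟨f, rfl⟩ := I.toCotangent_surjective x
  let q : (quotientExtension I).Ring := p
  let F : (quotientExtension I).ker := ⟨f.1, ker_quotientExtension.ge f.2⟩
  calc e (Ideal.Quotient.mk I p • I.toCotangent f)
      = .mk (q • F) := rfl
    _ = q • .mk F := map_smul _ _ _
    _ = Ideal.Quotient.mk I p • .mk F := (algebraMap_smul (MvPolynomial σ A ⧸ I) q _).symm

instance : Module.Free (MvPolynomial σ A ⧸ I) (quotientExtension I).CotangentSpace :=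
  .of_basis (quotientGenerators I).cotangentSpaceBasis

theorem cotangentSpaceBasis_repr_cotangentComplex_mk (f : (quotientExtension I).ker) (i : σ) :
    (quotientGenerators I).cotangentSpaceBasis.repr
      ((quotientExtension I).cotangentComplex (.mk f)) i =
      Ideal.Quotient.mk I (pderiv i f.1) :=
  ((quotientGenerators I).cotangentSpaceBasis_repr_one_tmul _ i).trans
    ((quotientGenerators I).algebraMap_apply _).symm

theorem map_preHIdeal_le_retractionIdeal (e : σ ≃ Fin n) :
    (preHIdeal e I).map (Ideal.Quotient.mk I) ≤
      retractionIdeal (quotientExtension I).cotangentComplex := by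
  simp only [preHIdeal, Ideal.map_iSup, iSup_le_iff, Ideal.map_le_iff_le_comap]
  intro r _ f hf
  rw [jacobiDelta, ← Ideal.span_eq (Submodule.colon _ _), Ideal.span_mul_span', Ideal.span_le]
  rintro _ ⟨h, hh, _, ⟨c, -, rfl⟩, rfl⟩
  let F (i : Fin r) : (quotientExtension I).ker := ⟨f i, ker_quotientExtension.ge (hf i)⟩
  have mem := mul_det_mem_retractionIdeal (quotientExtension I).cotangentComplex
    (fun i => .mk (F i)) (fun j => (quotientGenerators I).cotangentSpaceBasis.coord (c j))
    (algebraMap_smul_mem_span_range_mk (f := F)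
      (Submodule.colon_mono le_rfl ker_quotientExtension.le hh))
  simp only [Module.Basis.coord_apply, cotangentSpaceBasis_repr_cotangentComplex_mk] at mem
  rw [SetLike.mem_coe, Ideal.mem_comap, map_mul, RingHom.map_det]
  exact mem

end Presentation

section JacobianCriterion

variable {σ : Type*} {e : σ ≃ Fin n} {I : Ideal (MvPolynomial σ A)}
  {γ : MvPolynomial σ A ⧸ I} {R : Type*} [CommRing R] [Algebra (MvPolynomial σ A ⧸ I) R]

theorem exists_mem_retractionIdeal_isUnit (hγ : γ ∈ HIdeal e I)
    (hγR : IsUnit (algebraMap (MvPolynomial σ A ⧸ I) R γ)) :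
    ∃ b ∈ retractionIdeal (quotientExtension I).cotangentComplex,
      IsUnit (algebraMap (MvPolynomial σ A ⧸ I) R b) := by
  obtain ⟨k, hk⟩ := hγ
  exact ⟨γ ^ k, map_preHIdeal_le_retractionIdeal e hk, by simpa using hγR.pow k⟩

section FormallySmooth

variable [Algebra A R] [IsScalarTower A (MvPolynomial σ A ⧸ I) R]

theorem formallySmooth_of_mem_HIdeal (hγ : γ ∈ HIdeal e I)
    (W : Submonoid (MvPolynomial σ A ⧸ I)) [IsLocalization W R]
    (hγR : IsUnit (algebraMap _ R γ)) : FormallySmooth A R := by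
  obtain ⟨b, hb, hbR⟩ := exists_mem_retractionIdeal_isUnit hγ hγR
  rw [formallySmooth_iff_baseChange_split_injection W (quotientExtension I)]
  exact exists_baseChange_retraction_of_mem_retractionIdeal hb hbR

theorem formallySmooth_of_formallySmooth_quotient [FormallySmooth (MvPolynomial σ A ⧸ I) R]
    (hγ : γ ∈ HIdeal e I) (hγR : IsUnit (algebraMap (MvPolynomial σ A ⧸ I) R γ)) :
    FormallySmooth A R := by
  let Bγ := Localization.Away γ
  have : FormallySmooth A Bγ := formallySmooth_of_mem_HIdeal hγ (Submonoid.powers γ)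
    (IsLocalization.Away.algebraMap_isUnit γ)
  let : Algebra Bγ R := (IsLocalization.Away.lift γ hγR).toAlgebra
  have : IsScalarTower (MvPolynomial σ A ⧸ I) Bγ R :=
    .of_algebraMap_eq fun b => (IsLocalization.Away.lift_eq γ hγR b).symm
  have : IsScalarTower A Bγ R := .to₁₃₄ A (MvPolynomial σ A ⧸ I) Bγ R
  have : FormallySmooth Bγ R := .localization_base (Submonoid.powers γ)
  exact .comp A Bγ R

theorem mul_det_mem_preHIdeal {r : ℕ} {f : Fin r → MvPolynomial σ A} (hf : ∀ i, f i ∈ I)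
    {h : MvPolynomial σ A} (hh : h ∈ (Ideal.span (Set.range f)).colon I) {c : Fin r → σ}
    (hc : Function.Injective c) :
    h * (Matrix.of fun i j => pderiv (c j) (f i)).det ∈ preHIdeal e I := by
  have r_le : r ≤ n := by simpa using Fintype.card_le_of_injective _ (e.injective.comp hc)
  exact Ideal.mem_iSup_of_mem r <| Ideal.mem_iSup_of_mem r_le <| Ideal.mem_iSup_of_mem f <|
    Ideal.mem_iSup_of_mem hf <| Ideal.mul_mem_mul hh (Ideal.subset_span ⟨c, hc, rfl⟩)

theorem mem_HIdeal_of_formallySmooth (hI : I.FG) [IsLocalization.Away γ R] [FormallySmooth A R] :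
    γ ∈ HIdeal e I := by
  have : Finite σ := .of_equiv _ e.symm
  rw [HIdeal, Ideal.radical_eq_sInf, Ideal.mem_sInf]
  rintro Q ⟨preHIdeal_le, isPrime⟩
  by_contra hγ
  let K := Q.ResidueField
  have hγK : IsUnit (algebraMap _ K γ) :=
    Ne.isUnit (Ideal.algebraMap_residueField_eq_zero.not.2 hγ)
  let : Algebra R K := (IsLocalization.Away.lift γ hγK).toAlgebra
  have : IsScalarTower (MvPolynomial σ A ⧸ I) R K :=
    .of_algebraMap_eq fun b => (IsLocalization.Away.lift_eq γ hγK b).symm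
  obtain ⟨r, hr⟩ := (formallySmooth_iff_baseChange_split_injection (k := A) (L := R)
    (Submonoid.powers γ) (quotientExtension I)).1 inferInstance
  obtain ⟨s, f, c, (h : MvPolynomial σ A), hc, hf, ne_zero⟩ :=
    exists_mem_colon_and_minor_ne_zero (K := K) (P := quotientExtension I)
      (by rwa [ker_quotientExtension]) (quotientGenerators I).cotangentSpaceBasis
      (baseChange_injective_of_retraction hr)
  simp only [cotangentSpaceBasis_repr_cotangentComplex_mk] at ne_zero
  refine ne_zero (Ideal.algebraMap_residueField_eq_zero.2 (preHIdeal_le ?_))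
  have mem := mul_det_mem_preHIdeal (e := e) (fun i => ker_quotientExtension.le (f i).2)
    (Submodule.mem_colon.2 fun g hg => Submodule.mem_colon.1 hf g (ker_quotientExtension.ge hg)) hc
  have mem_map := Ideal.mem_map_of_mem (Ideal.Quotient.mk I) mem
  rw [map_mul, RingHom.map_det] at mem_map
  exact mem_map

end FormallySmooth

variable {S : Type*} [CommRing S] [Algebra (MvPolynomial σ A ⧸ I) S] [Algebra S R]
  [IsScalarTower (MvPolynomial σ A ⧸ I) S R]
  {f : (quotientExtension I).Cotangent →ₗ[MvPolynomial σ A ⧸ I] S}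

theorem formallySmooth_quotient_of_isSymmetricAlgebra (hf : IsSymmetricAlgebra f)
    (hγ : γ ∈ HIdeal e I) (W : Submonoid S) [IsLocalization W R]
    (hγR : IsUnit (algebraMap (MvPolynomial σ A ⧸ I) R γ)) :
    FormallySmooth (MvPolynomial σ A ⧸ I) R := by
  obtain ⟨b, hb, hbR⟩ := exists_mem_retractionIdeal_isUnit hγ hγR
  exact formallySmooth_of_isSymmetricAlgebra hf W hb hbR

theorem free_kaehlerDifferential_of_isSymmetricAlgebra [Algebra A R]
    [IsScalarTower A (MvPolynomial σ A ⧸ I) R] (hf : IsSymmetricAlgebra f)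
    (hγ : γ ∈ HIdeal e I) (W : Submonoid S) [IsLocalization W R]
    (hγR : IsUnit (algebraMap (MvPolynomial σ A ⧸ I) R γ)) :
    Module.Free R Ω[R⁄A] := by
  obtain ⟨b, hb, hbR⟩ := exists_mem_retractionIdeal_isUnit hγ hγR
  have : FormallySmooth (MvPolynomial σ A ⧸ I) R :=
    formallySmooth_quotient_of_isSymmetricAlgebra hf hγ W hγR
  obtain ⟨r, hr⟩ := exists_baseChange_retraction_of_mem_retractionIdeal hb hbR
  obtain ⟨equiv⟩ :=
    nonempty_kaehler_equiv_baseChange_cotangentSpace (quotientExtension I) hf W hr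
  exact .of_equiv equiv.symm

end JacobianCriterion

section Relations

variable {B M ι κ : Type*} [CommRing B] [AddCommGroup M] [Module B M] [DecidableEq ι]
  {π : (ι → B) →ₗ[B] M}

theorem linearMap_ext_apply_single [Finite ι] {C : Type*} [AddCommMonoid C] [Module B C]
    (hsurj : Function.Surjective π) {f g : M →ₗ[B] C}
    (h : ∀ i, f (π (Pi.single i 1)) = g (π (Pi.single i 1))) : f = g :=
  (LinearMap.cancel_right hsurj).1 (LinearMap.pi_ext' fun i => LinearMap.ext_ring (h i))

variable [Fintype ι] {v : κ → ι → B}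

theorem exists_linearMap_apply_single {C : Type*} [AddCommGroup C] [Module B C]
    (hsurj : Function.Surjective π)
    (hker : LinearMap.ker π = Submodule.span B (Set.range v)) {w : ι → C}
    (hw : ∀ j, ∑ i, v j i • w i = 0) :
    ∃ f : M →ₗ[B] C, ∀ i, f (π (Pi.single i 1)) = w i := by
  have ker_le : LinearMap.ker π ≤ LinearMap.ker (Fintype.linearCombination B w) := by
    rw [hker, Submodule.span_le, Set.range_subset_iff]
    exact hw
  exact ⟨(LinearMap.ker π).liftQ _ ker_le ∘ₗ (π.quotKerEquivOfSurjective hsurj).symm.toLinearMap,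
    fun i => by simp⟩

theorem sum_smul_apply_single (hker : LinearMap.ker π = Submodule.span B (Set.range v)) (j : κ) :
    ∑ i, v j i • π (Pi.single i 1) = 0 := by
  have mem : v j ∈ LinearMap.ker π := hker ▸ Submodule.subset_span ⟨j, rfl⟩
  simp only [← map_smul, ← map_sum, ← pi_eq_sum_univ', LinearMap.mem_ker.1 mem]

end Relations

section ConormalSymmetricAlgebra

variable {I : Ideal (MvPolynomial (Fin n) A)} {a : Fin N → Fin m → MvPolynomial (Fin n) A}

theorem symIdeal_fg (hI : I.FG) : (symIdeal I a).FG :=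
  Submodule.FG.sup (hI.map _) (Submodule.fg_span (Set.finite_range _))

variable (I a) in
/-- The structure of `B`-algebra on `B₁` given by `symMap`, where `B = A[Y]/I` and
`B₁ = A[Y, T]/symIdeal I a`. -/
noncomputable abbrev symAlgebra : Algebra (MvPolynomial (Fin n) A ⧸ I)
    (MvPolynomial (Fin n ⊕ Fin N) A ⧸ symIdeal I a) :=
  (symMap I a).toAlgebra

attribute [local instance] symAlgebra

instance symAlgebra_isScalarTower : IsScalarTower A (MvPolynomial (Fin n) A ⧸ I)
    (MvPolynomial (Fin n ⊕ Fin N) A ⧸ symIdeal I a) :=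
  .of_algebraMap_eq (S := MvPolynomial (Fin n) A ⧸ I) fun c =>
    (congrArg (Ideal.Quotient.mk (symIdeal I a)) ((rename Sum.inl).commutes c)).symm

theorem sum_smul_mk_X_inr (j : Fin m) :
    ∑ i, Ideal.Quotient.mk I (a i j) • Ideal.Quotient.mk (symIdeal I a) (X (Sum.inr i)) = 0 := by
  have mem : ∑ i, rename Sum.inl (a i j) * X (Sum.inr i) ∈ symIdeal I a :=
    Ideal.mem_sup_right (Ideal.subset_span ⟨j, rfl⟩)
  rw [← Ideal.Quotient.eq_zero_iff_mem, map_sum] at mem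
  exact mem

section AlgHom

variable {C : Type*} [CommSemiring C] [Algebra (MvPolynomial (Fin n) A ⧸ I) C]

theorem exists_algHom_quotient_symIdeal {t : Fin N → C}
    (ht : ∀ j, ∑ i, Ideal.Quotient.mk I (a i j) • t i = 0) :
    ∃ g : (MvPolynomial (Fin n ⊕ Fin N) A ⧸ symIdeal I a) →ₐ[MvPolynomial (Fin n) A ⧸ I] C,
      ∀ i, g (Ideal.Quotient.mk _ (X (Sum.inr i))) = t i := by
  let φ : MvPolynomial (Fin n) A →+* C := (algebraMap _ C).comp (Ideal.Quotient.mk I)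
  let u : MvPolynomial (Fin n ⊕ Fin N) A →+* C :=
    eval₂Hom (φ.comp MvPolynomial.C) (Sum.elim (φ ∘ X) t)
  have u_rename (p : MvPolynomial (Fin n) A) : u (rename Sum.inl p) = φ p := by
    suffices h : u.comp (rename Sum.inl : _ →ₐ[A] MvPolynomial (Fin n ⊕ Fin N) A).toRingHom = φ
      from RingHom.congr_fun h p
    ext <;> simp [u]
  have u_inr (i : Fin N) : u (X (Sum.inr i)) = t i := eval₂Hom_X' _ _ _
  have symIdeal_le : symIdeal I a ≤ RingHom.ker u := by
    refine sup_le (Ideal.map_le_iff_le_comap.2 fun p hp => ?_) (Ideal.span_le.2 ?_)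
    · exact (u_rename p).trans (by simp [φ, Ideal.Quotient.eq_zero_iff_mem.2 hp])
    · rintro _ ⟨j, rfl⟩
      rw [SetLike.mem_coe, RingHom.mem_ker, ← ht j, map_sum]
      simp only [map_mul, u_rename, u_inr, Algebra.smul_def]
      rfl
  refine ⟨⟨Ideal.Quotient.lift _ u symIdeal_le, fun b => ?_⟩, u_inr⟩
  obtain ⟨p, rfl⟩ := Ideal.Quotient.mk_surjective b
  exact u_rename p

theorem algHom_quotient_symIdeal_ext
    {g g' : (MvPolynomial (Fin n ⊕ Fin N) A ⧸ symIdeal I a) →ₐ[MvPolynomial (Fin n) A ⧸ I] C}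
    (h : ∀ i, g (Ideal.Quotient.mk _ (X (Sum.inr i))) =
      g' (Ideal.Quotient.mk _ (X (Sum.inr i)))) : g = g' := by
  have eq_rename (p : MvPolynomial (Fin n) A) :
      g (Ideal.Quotient.mk _ (rename Sum.inl p)) = g' (Ideal.Quotient.mk _ (rename Sum.inl p)) :=
    (g.commutes (Ideal.Quotient.mk I p)).trans (g'.commutes _).symm
  suffices h : g.toRingHom = g'.toRingHom from AlgHom.ext (RingHom.congr_fun h)
  refine Ideal.Quotient.ringHom_ext (MvPolynomial.ringHom_ext (fun c => ?_) ?_)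
  · simpa using eq_rename (MvPolynomial.C c)
  · rintro (i | i)
    · simpa using eq_rename (X i)
    · exact h i

end AlgHom

theorem exists_isSymmetricAlgebra_quotient_symIdeal {M : Type*} [AddCommGroup M]
    [Module (MvPolynomial (Fin n) A ⧸ I) M]
    {π : (Fin N → (MvPolynomial (Fin n) A ⧸ I)) →ₗ[MvPolynomial (Fin n) A ⧸ I] M}
    (hsurj : Function.Surjective π)
    (hker : LinearMap.ker π = Submodule.span (MvPolynomial (Fin n) A ⧸ I)
      (Set.range fun j : Fin m => fun i : Fin N => Ideal.Quotient.mk I (a i j))) :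
    ∃ f : M →ₗ[MvPolynomial (Fin n) A ⧸ I] MvPolynomial (Fin n ⊕ Fin N) A ⧸ symIdeal I a,
      IsSymmetricAlgebra f := by
  obtain ⟨f, hf⟩ := exists_linearMap_apply_single hsurj hker
    (w := fun i => Ideal.Quotient.mk (symIdeal I a) (X (Sum.inr i))) sum_smul_mk_X_inr
  obtain ⟨g, hg⟩ := exists_algHom_quotient_symIdeal (a := a)
    (t := fun i => SymmetricAlgebra.ι (MvPolynomial (Fin n) A ⧸ I) M (π (Pi.single i 1)))
    fun j => by
      simpa using congrArg
        (SymmetricAlgebra.ι (MvPolynomial (Fin n) A ⧸ I) M) (sum_smul_apply_single hker j)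
  exact ⟨f, isSymmetricAlgebra_of_algHom g
    (linearMap_ext_apply_single hsurj fun i => by simp [hg, hf])
    (algHom_quotient_symIdeal_ext fun i => by simp [hg, hf])⟩

variable {γ : MvPolynomial (Fin n) A ⧸ I}
  {f : (quotientExtension I).Cotangent →ₗ[MvPolynomial (Fin n) A ⧸ I]
    MvPolynomial (Fin n ⊕ Fin N) A ⧸ symIdeal I a}

theorem symMap_mem_HIdeal (hI : I.FG) (hf : IsSymmetricAlgebra f)
    (hγ : γ ∈ HIdeal (Equiv.refl (Fin n)) I) :
    symMap I a γ ∈ HIdeal finSumFinEquiv (symIdeal I a) := by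
  let R := Localization.Away (symMap I a γ)
  have hγR : IsUnit (algebraMap (MvPolynomial (Fin n) A ⧸ I) R γ) :=
    IsLocalization.Away.algebraMap_isUnit (symMap I a γ)
  have : FormallySmooth (MvPolynomial (Fin n) A ⧸ I) R :=
    formallySmooth_quotient_of_isSymmetricAlgebra hf hγ (Submonoid.powers (symMap I a γ)) hγR
  have : FormallySmooth A R := formallySmooth_of_formallySmooth_quotient hγ hγR
  exact mem_HIdeal_of_formallySmooth (R := R) (symIdeal_fg hI)

theorem free_of_isLocalizedModule_of_mem_HIdeal (hf : IsSymmetricAlgebra f)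
    (hγ : γ ∈ HIdeal (Equiv.refl (Fin n)) I)
    {R Ωγ : Type*} [CommRing R] [Algebra (MvPolynomial (Fin n ⊕ Fin N) A ⧸ symIdeal I a) R]
    [IsLocalization.Away (symMap I a γ) R] [AddCommGroup Ωγ]
    [Module (MvPolynomial (Fin n ⊕ Fin N) A ⧸ symIdeal I a) Ωγ] [Module R Ωγ]
    [IsScalarTower (MvPolynomial (Fin n ⊕ Fin N) A ⧸ symIdeal I a) R Ωγ]
    (l : Ω[(MvPolynomial (Fin n ⊕ Fin N) A ⧸ symIdeal I a)⁄A]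
      →ₗ[MvPolynomial (Fin n ⊕ Fin N) A ⧸ symIdeal I a] Ωγ)
    [IsLocalizedModule (Submonoid.powers (symMap I a γ)) l] : Module.Free R Ωγ := by
  let : Algebra (MvPolynomial (Fin n) A ⧸ I) R := .compHom R (symMap I a)
  let : Algebra A R :=
    .compHom R (algebraMap A (MvPolynomial (Fin n ⊕ Fin N) A ⧸ symIdeal I a))
  have : IsScalarTower (MvPolynomial (Fin n) A ⧸ I)
      (MvPolynomial (Fin n ⊕ Fin N) A ⧸ symIdeal I a) R := .of_algebraMap_eq fun _ => rfl
  have : IsScalarTower A (MvPolynomial (Fin n ⊕ Fin N) A ⧸ symIdeal I a) R :=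
    .of_algebraMap_eq (S := MvPolynomial (Fin n ⊕ Fin N) A ⧸ symIdeal I a) fun _ => rfl
  have : IsScalarTower A (MvPolynomial (Fin n) A ⧸ I) R :=
    .to₁₂₄ A _ (MvPolynomial (Fin n ⊕ Fin N) A ⧸ symIdeal I a) R
  have : Module.Free R Ω[R⁄A] := free_kaehlerDifferential_of_isSymmetricAlgebra hf hγ
    (Submonoid.powers (symMap I a γ)) (IsLocalization.Away.algebraMap_isUnit (symMap I a γ))
  exact free_of_isLocalizedModule_kaehlerDifferential (Submonoid.powers (symMap I a γ)) l

end ConormalSymmetricAlgebra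

theorem symmetricAlgebra_H_le_and_kaehler_localization_free_general
    (I : Ideal (MvPolynomial (Fin n) A)) (hI : I.FG)
    (a : Fin N → Fin m → MvPolynomial (Fin n) A)
    (π : (Fin N → (MvPolynomial (Fin n) A ⧸ I)) →ₗ[MvPolynomial (Fin n) A ⧸ I] I.Cotangent)
    (hsurj : Function.Surjective π)
    (hker : LinearMap.ker π = Submodule.span (MvPolynomial (Fin n) A ⧸ I)
      (Set.range fun j : Fin m => fun i : Fin N => Ideal.Quotient.mk I (a i j))) :
    Ideal.map (symMap I a) (HIdeal (Equiv.refl (Fin n)) I) ≤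
        HIdeal finSumFinEquiv (symIdeal I a) ∧
      ∀ γ, γ ∈ HIdeal (Equiv.refl (Fin n)) I →
        ∀ (B₁γ : Type v) (_ : CommRing B₁γ)
          (_ : Algebra (MvPolynomial (Fin n ⊕ Fin N) A ⧸ symIdeal I a) B₁γ)
          (_ : IsLocalization (Submonoid.powers (symMap I a γ)) B₁γ)
          (Ωγ : Type v) (_ : AddCommGroup Ωγ)
          (_ : Module (MvPolynomial (Fin n ⊕ Fin N) A ⧸ symIdeal I a) Ωγ)
          (_ : Module B₁γ Ωγ)
          (_ : IsScalarTower (MvPolynomial (Fin n ⊕ Fin N) A ⧸ symIdeal I a) B₁γ Ωγ)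
          (l : (Ω[(MvPolynomial (Fin n ⊕ Fin N) A ⧸ symIdeal I a)⁄A])
            →ₗ[MvPolynomial (Fin n ⊕ Fin N) A ⧸ symIdeal I a] Ωγ)
          (_ : IsLocalizedModule (Submonoid.powers (symMap I a γ)) l),
          Module.Free B₁γ Ωγ := by
  obtain ⟨cotangentEquiv⟩ := nonempty_cotangent_equiv_quotientExtension I
  obtain ⟨f, hf⟩ := exists_isSymmetricAlgebra_quotient_symIdeal
    (π := cotangentEquiv.toLinearMap ∘ₗ π)
    (cotangentEquiv.surjective.comp hsurj) (by rw [LinearEquiv.ker_comp, hker])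
  refine ⟨Ideal.map_le_iff_le_comap.2 fun γ hγ => symMap_mem_HIdeal hI hf hγ, ?_⟩
  intro γ hγ B₁γ _ _ _ Ωγ _ _ _ _ l _
  exact free_of_isLocalizedModule_of_mem_HIdeal hf hγ l

/-- Let `A` be a Noetherian ring, `B = A[Y]/I` a finitely presented `A`-algebra with
`Y = (Y₁,…,Yₙ)` and `B₁ = S_B(I/I²)` the symmetric algebra of the conormal module
`I/I²` over `B`, presented (via a presentation `B^m →(a_{ij}) B^N → I/I² → 0` of `I/I²`)
as `B₁ = A[Y,T]/I₁`, `I₁ = symIdeal I a`.  Then `H_{B/A}·B₁ ⊆ H_{B₁/A}`, and for every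
`γ ∈ H_{B/A}` the localization `(Ω_{B₁/A})_γ` of the module of Kähler differentials of
`B₁` over `A` is free over the localization `(B₁)_γ` (realizations of these two
localizations being abstractly quantified). -/
theorem symmetricAlgebra_H_le_and_kaehler_localization_free
    [IsNoetherianRing A] (I : Ideal (MvPolynomial (Fin n) A))
    (a : Fin N → Fin m → MvPolynomial (Fin n) A)
    (π : (Fin N → (MvPolynomial (Fin n) A ⧸ I)) →ₗ[MvPolynomial (Fin n) A ⧸ I] I.Cotangent)
    (hsurj : Function.Surjective π)
    (hker : LinearMap.ker π = Submodule.span (MvPolynomial (Fin n) A ⧸ I)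
      (Set.range fun j : Fin m => fun i : Fin N => Ideal.Quotient.mk I (a i j))) :
    Ideal.map (symMap I a) (HIdeal (Equiv.refl (Fin n)) I) ≤
        HIdeal finSumFinEquiv (symIdeal I a) ∧
      ∀ γ, γ ∈ HIdeal (Equiv.refl (Fin n)) I →
        ∀ (B₁γ : Type v) (_ : CommRing B₁γ)
          (_ : Algebra (MvPolynomial (Fin n ⊕ Fin N) A ⧸ symIdeal I a) B₁γ)
          (_ : IsLocalization (Submonoid.powers (symMap I a γ)) B₁γ)
          (Ωγ : Type v) (_ : AddCommGroup Ωγ)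
          (_ : Module (MvPolynomial (Fin n ⊕ Fin N) A ⧸ symIdeal I a) Ωγ)
          (_ : Module B₁γ Ωγ)
          (_ : IsScalarTower (MvPolynomial (Fin n ⊕ Fin N) A ⧸ symIdeal I a) B₁γ Ωγ)
          (l : (Ω[(MvPolynomial (Fin n ⊕ Fin N) A ⧸ symIdeal I a)⁄A])
            →ₗ[MvPolynomial (Fin n ⊕ Fin N) A ⧸ symIdeal I a] Ωγ)
          (_ : IsLocalizedModule (Submonoid.powers (symMap I a γ)) l),
          Module.Free B₁γ Ωγ :=
  symmetricAlgebra_H_le_and_kaehler_localization_free_general I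
    (IsNoetherian.noetherian I) a π hsurj hker
end

section
/- Let A be a Noetherian ring, B = A[Y]/I a finitely presented A-algebra, and b_1,…,b_q ∈ B elements generating an ideal whose radical is H_{B/A}. Let γ, γ' ∈ A and set B₀ = B[Z_1,…,Z_q,Z'_1,…,Z'_q]/(−γ + Σ_{i=1}^q b_iZ_i, −γ' + Σ_{i=1}^q b_iZ'_i). Then H_{B/A}·B₀ ⊆ H_{B₀/A}; in particular the images of γ and γ' in B₀ lie in H_{B₀/A}. Moreover, for any A-algebra A' and A-algebra morphism v: B → A' and elements z_1,…,z_q, z'_1,…,z'_q ∈ A' with γ = Σ_i v(b_i)z_i and γ' = Σ_i v(b_i)z'_i, the morphism v extends to an A-algebra morphism v₀: B₀ → A' with v₀(Z_i) = z_i and v₀(Z'_i) = z'_i. -/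
open MvPolynomial

universe u v

variable {A : Type u} [CommRing A] {n q : ℕ}

/-- The ideal of `A[Y, Z, Z']` presenting
`B₀ = B[Z,Z']/(-γ + Σᵢ bᵢ Zᵢ, -γ' + Σᵢ bᵢ Z'ᵢ)`, where `β i` is a lift of `bᵢ` to
`A[Y]`. -/
noncomputable def bzeroIdeal (I : Ideal (MvPolynomial (Fin n) A))
    (β : Fin q → MvPolynomial (Fin n) A) (γ γ' : A) :
    Ideal (MvPolynomial (Fin n ⊕ (Fin q ⊕ Fin q)) A) :=
  Ideal.map (MvPolynomial.rename Sum.inl) I ⊔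
    Ideal.span
      { -(C γ) + ∑ i : Fin q,
          MvPolynomial.rename Sum.inl (β i) * MvPolynomial.X (Sum.inr (Sum.inl i)),
        -(C γ') + ∑ i : Fin q,
          MvPolynomial.rename Sum.inl (β i) * MvPolynomial.X (Sum.inr (Sum.inr i)) }

lemma map_le_bzeroIdeal (I : Ideal (MvPolynomial (Fin n) A))
    (β : Fin q → MvPolynomial (Fin n) A) (γ γ' : A) :
    Ideal.map (MvPolynomial.rename Sum.inl) I ≤ bzeroIdeal I β γ γ' := by
  unfold bzeroIdeal; exact le_sup_left

/-- The canonical map `B = A[Y]/I → B₀`. -/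
noncomputable def bzeroMap (I : Ideal (MvPolynomial (Fin n) A))
    (β : Fin q → MvPolynomial (Fin n) A) (γ γ' : A) :
    (MvPolynomial (Fin n) A ⧸ I) →+*
      (MvPolynomial (Fin n ⊕ (Fin q ⊕ Fin q)) A ⧸ bzeroIdeal I β γ γ') :=
  Ideal.quotientMap (bzeroIdeal I β γ γ') (MvPolynomial.rename Sum.inl).toRingHom
    (Ideal.map_le_iff_le_comap.mp (map_le_bzeroIdeal I β γ γ'))

/-- The index equivalence `Fin n ⊕ (Fin q ⊕ Fin q) ≃ Fin (n + (q + q))`. -/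
def bzeroEquiv : (Fin n ⊕ (Fin q ⊕ Fin q)) ≃ Fin (n + (q + q)) :=
  (Equiv.sumCongr (Equiv.refl (Fin n)) finSumFinEquiv).trans finSumFinEquiv

/-!
Let `f` be a system in `I` and `x ∈ ((f) : I)`. Adjoin to `f` the two relations
`φ = -γ + Σᵢ bᵢ Zᵢ` and `φ' = -γ' + Σᵢ bᵢ Z'ᵢ`. Then `x` still multiplies the enlarged ideal
`I + (φ, φ')` into `(f, φ, φ')`, and since `f` does not involve `Z, Z'`, the Jacobian matrix is
block triangular: choosing the additional columns `Z_j, Z'_j` multiplies a minor of `f` by `b_j²`.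
Hence `H_{B/A} · b_j² ⊆ H_{B₀/A}` for every `j`, and as `H_{B₀/A}` is radical it contains the
image of `H_{B/A} ∩ √(b₁, …, b_q)`, which is all of `H_{B/A}`. The images of `γ` and `γ'` are
combinations of the `b_j`.
-/

section JacobiMinor

variable {σ τ ι κ : Type*} [Fintype ι] [DecidableEq ι] [Fintype κ] [DecidableEq κ]

/-- The minor of the Jacobian matrix of the system `f` in the columns selected by `c`. It is
indexed by an arbitrary finite type, so that a disjoint union of systems can be indexed by a sum
type. -/
noncomputable def jacobiMinor (f : ι → MvPolynomial σ A) (c : ι → σ) : MvPolynomial σ A :=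
  (Matrix.of fun i j => pderiv (c j) (f i)).det

lemma jacobiMinor_comp_equiv (f : κ → MvPolynomial σ A) (c : κ → σ) (w : ι ≃ κ) :
    jacobiMinor (f ∘ w) (c ∘ w) = jacobiMinor f c :=
  Matrix.det_submatrix_equiv_self w (Matrix.of fun i j => pderiv (c j) (f i))

lemma jacobiMinor_rename {ρ : σ → τ} (hρ : Function.Injective ρ) (f : ι → MvPolynomial σ A)
    (c : ι → σ) : jacobiMinor (rename ρ ∘ f) (ρ ∘ c) = rename ρ (jacobiMinor f c) := by
  rw [jacobiMinor, jacobiMinor, AlgHom.map_det]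
  congr 1
  ext1 i j
  exact pderiv_rename hρ _ _

lemma pderiv_inr_rename_inl (t : τ) (p : MvPolynomial σ A) :
    pderiv (Sum.inr t : σ ⊕ τ) (rename Sum.inl p) = 0 := by
  refine pderiv_eq_zero_of_notMem_vars fun h => ?_
  obtain ⟨s, -, hs⟩ := mem_vars_rename _ _ h
  exact Sum.inl_ne_inr hs

lemma jacobiMinor_sumElim_rename (f : ι → MvPolynomial σ A) (c : ι → σ)
    (g : κ → MvPolynomial (σ ⊕ τ) A) (d : κ → τ) :
    jacobiMinor (Sum.elim (rename Sum.inl ∘ f) g) (Sum.map c d) =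
      rename Sum.inl (jacobiMinor f c) * jacobiMinor g (Sum.inr ∘ d) := by
  rw [← jacobiMinor_rename Sum.inl_injective, jacobiMinor, jacobiMinor, jacobiMinor,
    ← Matrix.det_fromBlocks_zero₁₂ _ (Matrix.of fun i j => pderiv (Sum.inl (c j)) (g i))]
  congr 1
  ext1 (i | i) (j | j)
  · rfl
  · exact pderiv_inr_rename_inl _ _
  · rfl
  · rfl

end JacobiMinor

section PreHIdeal

variable {σ τ ι κ : Type*} {m : ℕ}

lemma mul_jacobiMinor_mem_preHIdeal [Fintype ι] [DecidableEq ι] (e : σ ≃ Fin n)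
    {I : Ideal (MvPolynomial σ A)} {f : ι → MvPolynomial σ A} (hf : ∀ i, f i ∈ I)
    {c : ι → σ} (hc : Function.Injective c) {g : MvPolynomial σ A}
    (hg : g ∈ Submodule.colon (Ideal.span (Set.range f)) (I : Set (MvPolynomial σ A))) :
    g * jacobiMinor f c ∈ preHIdeal e I := by
  have hcard : Fintype.card ι ≤ n := by
    simpa using Fintype.card_le_of_injective _ (e.injective.comp hc)
  let w := (Fintype.equivFin ι).symm
  rw [← jacobiMinor_comp_equiv f c w]
  rw [← w.surjective.range_comp f] at hg
  exact Submodule.mem_iSup_of_mem _ <| Submodule.mem_iSup_of_mem hcard <|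
    Submodule.mem_iSup_of_mem (f ∘ w) <| Submodule.mem_iSup_of_mem (fun i => hf (w i)) <|
    Ideal.mul_mem_mul hg (Ideal.subset_span ⟨c ∘ w, hc.comp w.injective, rfl⟩)

lemma preHIdeal_le {e : σ ≃ Fin n} {I J : Ideal (MvPolynomial σ A)}
    (h : ∀ (r : ℕ) (f : Fin r → MvPolynomial σ A) (c : Fin r → σ) (g : MvPolynomial σ A),
      (∀ i, f i ∈ I) → Function.Injective c →
      g ∈ Submodule.colon (Ideal.span (Set.range f)) (I : Set (MvPolynomial σ A)) →
      g * jacobiMinor f c ∈ J) :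
    preHIdeal e I ≤ J := by
  refine iSup_le fun r => iSup_le fun _ => iSup_le fun f => iSup_le fun hf => ?_
  refine Ideal.mul_le.2 fun g hg δ hδ => ?_
  suffices hle : jacobiDelta f ≤ Submodule.colon J {g} by
    simpa only [smul_eq_mul, mul_comm] using Submodule.mem_colon_singleton.1 (hle hδ)
  refine Ideal.span_le.2 ?_
  rintro _ ⟨c, hc, rfl⟩
  refine Submodule.mem_colon_singleton.2 ?_
  rw [smul_eq_mul, mul_comm]
  exact h r f c g hf hc hg

lemma map_mem_colon_sup {R S : Type*} [CommRing R] [CommRing S] (φ : R →+* S) {I J : Ideal R}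
    (K : Ideal S) {x : R} (hx : x ∈ Submodule.colon J (I : Set R)) :
    φ x ∈ Submodule.colon (J.map φ ⊔ K) (I.map φ ⊔ K : Ideal S) := by
  have hmap : φ x ∈ Submodule.colon (J.map φ) (I.map φ : Set S) := by
    rw [show I.map φ = Ideal.span (φ '' I) from rfl, Ideal.colon_span, Submodule.mem_colon]
    rintro _ ⟨y, hy, rfl⟩
    rw [smul_eq_mul, ← map_mul]
    exact Ideal.mem_map_of_mem φ (Submodule.mem_colon.1 hx y hy)
  refine Submodule.mem_colon.2 fun s hs => ?_
  obtain ⟨a, ha, b, hb, rfl⟩ := Submodule.mem_sup.1 hs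
  rw [smul_add]
  exact add_mem (Ideal.mem_sup_left (Submodule.mem_colon.1 hmap a ha))
    (Ideal.mem_sup_right (K.mul_mem_left _ hb))

lemma rename_mul_jacobiMinor_mem_preHIdeal [Fintype κ] [DecidableEq κ] (e : σ ≃ Fin n)
    (e' : σ ⊕ τ ≃ Fin m) {I : Ideal (MvPolynomial σ A)} (g : κ → MvPolynomial (σ ⊕ τ) A)
    {d : κ → τ} (hd : Function.Injective d) {x : MvPolynomial σ A} (hx : x ∈ preHIdeal e I) :
    rename Sum.inl x * jacobiMinor g (Sum.inr ∘ d) ∈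
      preHIdeal e' (I.map (rename Sum.inl) ⊔ Ideal.span (Set.range g)) := by
  set J := I.map (rename Sum.inl) ⊔ Ideal.span (Set.range g)
  suffices hle : preHIdeal e I ≤ Ideal.comap (rename Sum.inl)
      (Submodule.colon (preHIdeal e' J) {jacobiMinor g (Sum.inr ∘ d)}) from
    Submodule.mem_colon_singleton.1 (hle hx)
  refine preHIdeal_le fun r f c p hf hc hp => ?_
  rw [Ideal.mem_comap, Submodule.mem_colon_singleton, smul_eq_mul, map_mul, mul_assoc,
    ← jacobiMinor_sumElim_rename]
  refine mul_jacobiMinor_mem_preHIdeal e' ?_ (hc.sumMap hd) ?_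
  · rintro (i | k)
    · exact Ideal.mem_sup_left (Ideal.mem_map_of_mem _ (hf i))
    · exact Ideal.mem_sup_right (Ideal.subset_span ⟨k, rfl⟩)
  · rw [Set.Sum.elim_range, Set.range_comp, Ideal.span_union, ← Ideal.map_span]
    exact map_mem_colon_sup (rename Sum.inl : _ →ₐ[A] MvPolynomial (σ ⊕ τ) A).toRingHom _ hp

end PreHIdeal

section HIdeal

variable {σ τ κ : Type*} {m : ℕ}

lemma isRadical_HIdeal (e : σ ≃ Fin n) (I : Ideal (MvPolynomial σ A)) : (HIdeal e I).IsRadical :=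
  Ideal.radical_isRadical _

lemma isRadical_colon {R : Type*} [CommRing R] {K : Ideal R} (hK : K.IsRadical) (S : Set R) :
    (Submodule.colon K S).IsRadical := by
  rintro x ⟨k, hk⟩
  refine Submodule.mem_colon.2 fun s hs => hK ⟨k + 1, ?_⟩
  have hpow : (x * s) ^ (k + 1) = x ^ k * s * (x * s ^ k) := by ring
  rw [smul_eq_mul, hpow]
  exact K.mul_mem_right _ (Submodule.mem_colon.1 hk s hs)

lemma map_inf_radical_span_range_le {R S ι : Type*} [CommRing R] [CommRing S] (φ : R →+* S)
    {H : Ideal R} {K : Ideal S} {b : ι → R} (hK : K.IsRadical)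
    (h : ∀ x ∈ H, ∀ i, φ x * φ (b i) ∈ K) :
    (H ⊓ (Ideal.span (Set.range b)).radical).map φ ≤ K := by
  refine Ideal.map_le_iff_le_comap.2 fun x ⟨hxH, hxb⟩ => hK ⟨2, ?_⟩
  suffices hle : (Ideal.span (Set.range b)).radical ≤
      Ideal.comap φ (Submodule.colon K {φ x}) by
    rw [sq]
    exact Submodule.mem_colon_singleton.1 (hle hxb)
  refine ((isRadical_colon hK _).comap φ).radical_le_iff.2 (Ideal.span_le.2 ?_)
  rintro _ ⟨i, rfl⟩
  refine Submodule.mem_colon_singleton.2 ?_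
  rw [smul_eq_mul, mul_comm]
  exact h x hxH i

lemma quotientMap_mul_jacobiMinor_mem_HIdeal [Fintype κ] [DecidableEq κ] (e : σ ≃ Fin n)
    (e' : σ ⊕ τ ≃ Fin m) {I : Ideal (MvPolynomial σ A)} {J : Ideal (MvPolynomial (σ ⊕ τ) A)}
    {g : κ → MvPolynomial (σ ⊕ τ) A}
    (hJ : J = I.map (rename Sum.inl) ⊔ Ideal.span (Set.range g))
    (hIJ : I ≤ J.comap (rename Sum.inl).toRingHom) {d : κ → τ} (hd : Function.Injective d)
    {x : MvPolynomial σ A ⧸ I} (hx : x ∈ HIdeal e I) :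
    Ideal.quotientMap J (rename Sum.inl).toRingHom hIJ x *
      Ideal.Quotient.mk J (jacobiMinor g (Sum.inr ∘ d)) ∈ HIdeal e' J := by
  set ψ := Ideal.quotientMap J (rename Sum.inl).toRingHom hIJ
  suffices hle : HIdeal e I ≤ Ideal.comap ψ
      (Submodule.colon (HIdeal e' J) {Ideal.Quotient.mk J (jacobiMinor g (Sum.inr ∘ d))}) from
    Submodule.mem_colon_singleton.1 (hle hx)
  refine ((isRadical_colon (isRadical_HIdeal e' J) _).comap ψ).radical_le_iff.2 ?_
  refine Ideal.map_le_iff_le_comap.2 fun p hp => ?_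
  refine Submodule.mem_colon_singleton.2 (Ideal.le_radical ?_)
  have hmem := rename_mul_jacobiMinor_mem_preHIdeal e e' g hd hp
  rw [← hJ] at hmem
  exact Ideal.mem_map_of_mem (Ideal.Quotient.mk J) hmem

end HIdeal

section LinearRelation

variable {σ τ ι : Type*} [Fintype ι]

/-- The polynomial `-a + Σᵢ βᵢ Z_{s i}` of `A[Y, Z]`: the relations that define `B₀` are
`linearRelation β γ Sum.inl` and `linearRelation β γ' Sum.inr`. -/
noncomputable def linearRelation (β : ι → MvPolynomial σ A) (a : A) (s : ι → τ) :
    MvPolynomial (σ ⊕ τ) A :=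
  -(C a) + ∑ i, rename Sum.inl (β i) * X (Sum.inr (s i))

lemma pderiv_linearRelation_apply (β : ι → MvPolynomial σ A) (a : A) {s : ι → τ}
    (hs : Function.Injective s) (j : ι) :
    pderiv (Sum.inr (s j)) (linearRelation β a s) = rename Sum.inl (β j) := by
  classical
  simp [linearRelation, pderiv_inr_rename_inl, pderiv_X, Pi.single_apply, hs.eq_iff]

lemma pderiv_linearRelation_of_notMem (β : ι → MvPolynomial σ A) (a : A) {s : ι → τ} {t : τ}
    (ht : t ∉ Set.range s) : pderiv (Sum.inr t) (linearRelation β a s) = 0 := by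
  have hne : ∀ i, s i ≠ t := fun i hi => ht ⟨i, hi⟩
  simp [linearRelation, pderiv_inr_rename_inl, pderiv_X_of_ne, hne]

lemma jacobiMinor_linearRelation_pair (β : ι → MvPolynomial σ A) (a a' : A) (j : ι) :
    jacobiMinor ![linearRelation β a Sum.inl, linearRelation β a' Sum.inr]
      (Sum.inr ∘ ![Sum.inl j, Sum.inr j]) = rename Sum.inl (β j) ^ 2 := by
  simp [jacobiMinor, Matrix.det_fin_two, pderiv_linearRelation_apply, Sum.inl_injective,
    Sum.inr_injective, pderiv_linearRelation_of_notMem, sq]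

lemma aeval_sumElim_linearRelation {S : Type*} [CommRing S] [Algebra A S] (y : σ → S) (z : τ → S)
    (β : ι → MvPolynomial σ A) (a : A) (s : ι → τ) :
    aeval (Sum.elim y z) (linearRelation β a s) =
      -algebraMap A S a + ∑ i, aeval y (β i) * z (s i) := by
  simp [linearRelation, aeval_rename]

lemma algebraMap_mem_of_linearRelation_mem {β : ι → MvPolynomial σ A} {a : A} {s : ι → τ}
    {J : Ideal (MvPolynomial (σ ⊕ τ) A)} (ha : linearRelation β a s ∈ J)
    {K : Ideal (MvPolynomial (σ ⊕ τ) A ⧸ J)}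
    (hβ : ∀ i, Ideal.Quotient.mk J (rename Sum.inl (β i)) ∈ K) :
    algebraMap A (MvPolynomial (σ ⊕ τ) A ⧸ J) a ∈ K := by
  have hsum : Ideal.Quotient.mk J (C a) =
      Ideal.Quotient.mk J (∑ i, rename Sum.inl (β i) * X (Sum.inr (s i))) := by
    rw [eq_comm, Ideal.Quotient.eq, sub_eq_neg_add]
    exact ha
  change Ideal.Quotient.mk J (C a) ∈ K
  rw [hsum, map_sum]
  refine sum_mem fun i _ => ?_
  rw [map_mul]
  exact K.mul_mem_right _ (hβ i)

end LinearRelation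

lemma aeval_algHom_mk_X {σ S : Type*} [CommRing S] [Algebra A S] {I : Ideal (MvPolynomial σ A)}
    (v : (MvPolynomial σ A ⧸ I) →ₐ[A] S) (p : MvPolynomial σ A) :
    aeval (fun i => v (Ideal.Quotient.mk I (X i))) p = v (Ideal.Quotient.mk I p) :=
  (DFunLike.congr_fun (aeval_unique (v.comp (Ideal.Quotient.mkₐ A I))) p).symm

lemma exists_algHom_quotient_sup_span {σ τ S : Type*} [CommRing S] [Algebra A S]
    {I : Ideal (MvPolynomial σ A)} {G : Set (MvPolynomial (σ ⊕ τ) A)}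
    (v : (MvPolynomial σ A ⧸ I) →ₐ[A] S) (z : τ → S)
    (hG : ∀ g ∈ G, aeval (Sum.elim (fun i => v (Ideal.Quotient.mk I (X i))) z) g = 0) :
    ∃ v₀ : (MvPolynomial (σ ⊕ τ) A ⧸ I.map (rename Sum.inl) ⊔ Ideal.span G) →ₐ[A] S,
      (∀ p, v₀ (Ideal.Quotient.mk _ (rename Sum.inl p)) = v (Ideal.Quotient.mk I p)) ∧
        ∀ t, v₀ (Ideal.Quotient.mk _ (X (Sum.inr t))) = z t := by
  set w := aeval (R := A) (Sum.elim (fun i => v (Ideal.Quotient.mk I (X i))) z)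
  have hw : ∀ p, w (rename Sum.inl p) = v (Ideal.Quotient.mk I p) := fun p =>
    (aeval_rename _ _ _).trans (aeval_algHom_mk_X v p)
  have hker : I.map (rename Sum.inl) ⊔ Ideal.span G ≤ RingHom.ker w := by
    refine sup_le (Ideal.map_le_iff_le_comap.2 fun p hp => ?_) (Ideal.span_le.2 hG)
    rw [Ideal.mem_comap, RingHom.mem_ker, hw, Ideal.Quotient.eq_zero_iff_mem.2 hp, map_zero]
  exact ⟨Ideal.Quotient.liftₐ _ w hker, hw, fun t => aeval_X _ _⟩

section Bzero

variable (I : Ideal (MvPolynomial (Fin n) A)) (β : Fin q → MvPolynomial (Fin n) A) (γ γ' : A)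

lemma bzeroIdeal_eq_sup_span_range :
    bzeroIdeal I β γ γ' = I.map (rename Sum.inl) ⊔ Ideal.span
      (Set.range ![linearRelation β γ Sum.inl, linearRelation β γ' Sum.inr]) := by
  rw [Matrix.range_cons, Matrix.range_cons, Matrix.range_empty, Set.union_empty,
    Set.singleton_union]
  rfl

lemma linearRelation_inl_mem_bzeroIdeal : linearRelation β γ Sum.inl ∈ bzeroIdeal I β γ γ' :=
  Ideal.mem_sup_right (Ideal.subset_span (Or.inl rfl))

lemma linearRelation_inr_mem_bzeroIdeal : linearRelation β γ' Sum.inr ∈ bzeroIdeal I β γ γ' :=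
  Ideal.mem_sup_right (Ideal.subset_span (Or.inr rfl))

lemma bzeroMap_mul_bzeroMap_mk_mem_HIdeal {x : MvPolynomial (Fin n) A ⧸ I}
    (hx : x ∈ HIdeal (Equiv.refl (Fin n)) I) (j : Fin q) :
    bzeroMap I β γ γ' x * bzeroMap I β γ γ' (Ideal.Quotient.mk I (β j)) ∈
      HIdeal bzeroEquiv (bzeroIdeal I β γ γ') := by
  have hinj : Function.Injective ![(Sum.inl j : Fin q ⊕ Fin q), Sum.inr j] := by
    simp [Function.Injective, Fin.forall_fin_two]
  have hsq : bzeroMap I β γ γ' x * bzeroMap I β γ γ' (Ideal.Quotient.mk I (β j)) ^ 2 ∈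
      HIdeal bzeroEquiv (bzeroIdeal I β γ γ') := by
    have hminor := quotientMap_mul_jacobiMinor_mem_HIdeal _ bzeroEquiv
      (bzeroIdeal_eq_sup_span_range I β γ γ')
      (Ideal.map_le_iff_le_comap.1 (map_le_bzeroIdeal I β γ γ')) hinj hx
    rwa [jacobiMinor_linearRelation_pair, map_pow] at hminor
  refine isRadical_HIdeal _ _ ⟨2, ?_⟩
  rw [mul_pow, sq (bzeroMap I β γ γ' x), mul_assoc]
  exact Ideal.mul_mem_left _ _ hsq

lemma map_bzeroMap_HIdeal_inf_radical_le :
    (HIdeal (Equiv.refl (Fin n)) I ⊓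
      (Ideal.span (Set.range fun i => Ideal.Quotient.mk I (β i))).radical).map
        (bzeroMap I β γ γ') ≤ HIdeal bzeroEquiv (bzeroIdeal I β γ γ') :=
  map_inf_radical_span_range_le _ (isRadical_HIdeal _ _) fun _ hx j =>
    bzeroMap_mul_bzeroMap_mk_mem_HIdeal I β γ γ' hx j

lemma exists_algHom_bzero_extending {S : Type*} [CommRing S] [Algebra A S]
    (v : (MvPolynomial (Fin n) A ⧸ I) →ₐ[A] S) {z z' : Fin q → S}
    (hz : algebraMap A S γ = ∑ i, v (Ideal.Quotient.mk I (β i)) * z i)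
    (hz' : algebraMap A S γ' = ∑ i, v (Ideal.Quotient.mk I (β i)) * z' i) :
    ∃ v₀ : (MvPolynomial (Fin n ⊕ (Fin q ⊕ Fin q)) A ⧸ bzeroIdeal I β γ γ') →ₐ[A] S,
      (∀ x, v₀ (bzeroMap I β γ γ' x) = v x) ∧
      (∀ i, v₀ (Ideal.Quotient.mk _ (X (Sum.inr (Sum.inl i)))) = z i) ∧
      (∀ i, v₀ (Ideal.Quotient.mk _ (X (Sum.inr (Sum.inr i)))) = z' i) := by
  obtain ⟨v₀, hv₀, hZ⟩ := exists_algHom_quotient_sup_span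
    (G := {linearRelation β γ Sum.inl, linearRelation β γ' Sum.inr}) v (Sum.elim z z') (by
      rintro _ (rfl | rfl)
      · simp only [aeval_sumElim_linearRelation, aeval_algHom_mk_X, hz, Sum.elim_inl,
          neg_add_cancel]
      · simp only [aeval_sumElim_linearRelation, aeval_algHom_mk_X, hz', Sum.elim_inr,
          neg_add_cancel])
  exact ⟨v₀, Ideal.Quotient.mk_surjective.forall.2 hv₀, fun i => hZ (Sum.inl i),
    fun i => hZ (Sum.inr i)⟩

end Bzero

theorem bzero_H_le_and_extension_general
    (I : Ideal (MvPolynomial (Fin n) A)) (β : Fin q → MvPolynomial (Fin n) A)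
    (hb : (Ideal.span (Set.range fun i => Ideal.Quotient.mk I (β i))).radical =
      HIdeal (Equiv.refl (Fin n)) I)
    (γ γ' : A) :
    Ideal.map (bzeroMap I β γ γ') (HIdeal (Equiv.refl (Fin n)) I) ≤
        HIdeal bzeroEquiv (bzeroIdeal I β γ γ') ∧
      algebraMap A (MvPolynomial (Fin n ⊕ (Fin q ⊕ Fin q)) A ⧸ bzeroIdeal I β γ γ') γ ∈
        HIdeal bzeroEquiv (bzeroIdeal I β γ γ') ∧
      algebraMap A (MvPolynomial (Fin n ⊕ (Fin q ⊕ Fin q)) A ⧸ bzeroIdeal I β γ γ') γ' ∈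
        HIdeal bzeroEquiv (bzeroIdeal I β γ γ') ∧
      ∀ (A' : Type v) (_ : CommRing A') (_ : Algebra A A')
        (v : (MvPolynomial (Fin n) A ⧸ I) →ₐ[A] A') (z z' : Fin q → A'),
        algebraMap A A' γ = ∑ i : Fin q, v (Ideal.Quotient.mk I (β i)) * z i →
        algebraMap A A' γ' = ∑ i : Fin q, v (Ideal.Quotient.mk I (β i)) * z' i →
        ∃ v₀ : (MvPolynomial (Fin n ⊕ (Fin q ⊕ Fin q)) A ⧸ bzeroIdeal I β γ γ') →ₐ[A] A',
          (∀ x, v₀ (bzeroMap I β γ γ' x) = v x) ∧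
          (∀ i, v₀ (Ideal.Quotient.mk (bzeroIdeal I β γ γ')
            (MvPolynomial.X (Sum.inr (Sum.inl i)))) = z i) ∧
          (∀ i, v₀ (Ideal.Quotient.mk (bzeroIdeal I β γ γ')
            (MvPolynomial.X (Sum.inr (Sum.inr i)))) = z' i) := by
  have hle : Ideal.map (bzeroMap I β γ γ') (HIdeal (Equiv.refl (Fin n)) I) ≤
      HIdeal bzeroEquiv (bzeroIdeal I β γ γ') := by
    simpa only [hb, inf_idem] using map_bzeroMap_HIdeal_inf_radical_le I β γ γ'
  have hβ : ∀ i, Ideal.Quotient.mk (bzeroIdeal I β γ γ') (rename Sum.inl (β i)) ∈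
      HIdeal bzeroEquiv (bzeroIdeal I β γ γ') := fun i =>
    hle (Ideal.mem_map_of_mem (bzeroMap I β γ γ')
      (hb ▸ Ideal.le_radical (Ideal.subset_span (Set.mem_range_self i))))
  exact ⟨hle, algebraMap_mem_of_linearRelation_mem (linearRelation_inl_mem_bzeroIdeal I β γ γ') hβ,
    algebraMap_mem_of_linearRelation_mem (linearRelation_inr_mem_bzeroIdeal I β γ γ') hβ,
    fun _ _ _ v _ _ hz hz' => exists_algHom_bzero_extending I β γ γ' v hz hz'⟩

/-- Let `A` be a Noetherian ring, `B = A[Y]/I` a finitely presented `A`-algebra and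
`b₁,…,b_q ∈ B` elements generating an ideal whose radical is `H_{B/A}` (the `β i ∈ A[Y]`
are lifts of the `b i`).  Let `γ, γ' ∈ A` and set
`B₀ = B[Z,Z']/(-γ + Σᵢ bᵢZᵢ, -γ' + Σᵢ bᵢZ'ᵢ)`.  Then `H_{B/A}·B₀ ⊆ H_{B₀/A}`; in
particular the images of `γ, γ'` in `B₀` lie in `H_{B₀/A}`.  Moreover, for any
`A`-algebra `A'`, any `A`-algebra morphism `v : B → A'` and any
`z, z' : Fin q → A'` with `γ = Σᵢ v(bᵢ)zᵢ` and `γ' = Σᵢ v(bᵢ)z'ᵢ`, the morphism `v`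
extends to an `A`-algebra morphism `v₀ : B₀ → A'` with `v₀(Zᵢ) = zᵢ`, `v₀(Z'ᵢ) = z'ᵢ`. -/
theorem bzero_H_le_and_extension [IsNoetherianRing A]
    (I : Ideal (MvPolynomial (Fin n) A)) (β : Fin q → MvPolynomial (Fin n) A)
    (hb : (Ideal.span (Set.range fun i => Ideal.Quotient.mk I (β i))).radical =
      HIdeal (Equiv.refl (Fin n)) I)
    (γ γ' : A) :
    Ideal.map (bzeroMap I β γ γ') (HIdeal (Equiv.refl (Fin n)) I) ≤
        HIdeal bzeroEquiv (bzeroIdeal I β γ γ') ∧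
      algebraMap A (MvPolynomial (Fin n ⊕ (Fin q ⊕ Fin q)) A ⧸ bzeroIdeal I β γ γ') γ ∈
        HIdeal bzeroEquiv (bzeroIdeal I β γ γ') ∧
      algebraMap A (MvPolynomial (Fin n ⊕ (Fin q ⊕ Fin q)) A ⧸ bzeroIdeal I β γ γ') γ' ∈
        HIdeal bzeroEquiv (bzeroIdeal I β γ γ') ∧
      ∀ (A' : Type v) (_ : CommRing A') (_ : Algebra A A')
        (v : (MvPolynomial (Fin n) A ⧸ I) →ₐ[A] A') (z z' : Fin q → A'),
        algebraMap A A' γ = ∑ i : Fin q, v (Ideal.Quotient.mk I (β i)) * z i →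
        algebraMap A A' γ' = ∑ i : Fin q, v (Ideal.Quotient.mk I (β i)) * z' i →
        ∃ v₀ : (MvPolynomial (Fin n ⊕ (Fin q ⊕ Fin q)) A ⧸ bzeroIdeal I β γ γ') →ₐ[A] A',
          (∀ x, v₀ (bzeroMap I β γ γ' x) = v x) ∧
          (∀ i, v₀ (Ideal.Quotient.mk (bzeroIdeal I β γ γ')
            (MvPolynomial.X (Sum.inr (Sum.inl i)))) = z i) ∧
          (∀ i, v₀ (Ideal.Quotient.mk (bzeroIdeal I β γ γ')
            (MvPolynomial.X (Sum.inr (Sum.inr i)))) = z' i) := by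
  exact bzero_H_le_and_extension_general I β hb γ γ'
end

section
/- Let A be a commutative ring, (A', m') a Henselian local ring equipped with an A-algebra structure, J ⊆ m' an ideal, and C a smooth A-algebra. Then every A-algebra morphism C → A'/J lifts to an A-algebra morphism C → A' (i.e., composing the lift with the projection A' → A'/J recovers the given morphism). -/
/-!
Locally at any prime, a smooth `A`-algebra is standard étale over a polynomial ring
`A[x₁, …, xₙ]`. A morphism from it to the local ring `A' ⧸ J` inverts everything outside the
preimage of the maximal ideal, so it factors through such a local piece. The images of the `xᵢ` lift
arbitrarily, and extending the resulting map `A[x₁, …, xₙ] → A'` to the standard étale algebra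
amounts to lifting a simple root `y` of a monic polynomial `F` from `A' ⧸ J` to `A'`. Hensel's lemma
gives a root `x` congruent to `y` modulo the maximal ideal only, but then `F(x) - F(y)` is a unit
multiple of `x - y`, so `F(y) ∈ J` forces `x - y ∈ J`.
-/

section HenselianPair

open Polynomial

variable {A : Type*} [CommRing A] {I J : Ideal A}

lemma associated_eval_sub_eval_of_sub_mem (hI : I ≤ Ideal.jacobson ⊥) (F : A[X]) {x y : A}
    (hxy : x - y ∈ I) (hF : IsUnit (F.derivative.eval y)) :
    Associated (x - y) (F.eval x - F.eval y) := by
  obtain ⟨c, hc⟩ := F.exists_mul_sq_add_linear_part_eq_eval_add y (x - y)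
  have := isLocalHom_of_le_jacobson_bot I hI
  have hu : IsUnit (c * (x - y) + F.derivative.eval y) := by
    refine IsUnit.of_map (Ideal.Quotient.mk I) _ ?_
    rw [map_add, Ideal.Quotient.eq_zero_iff_mem.mpr (I.mul_mem_left c hxy), zero_add]
    exact hF.map _
  refine ⟨hu.unit, ?_⟩
  rw [add_sub_cancel] at hc
  rw [hu.unit_spec]
  linear_combination hc

lemma henselianRing_of_le [HenselianRing A I] (hJI : J ≤ I) : HenselianRing A J where
  jac := hJI.trans HenselianRing.jac
  is_henselian F hF y hy hy' := by
    have hI : I ≤ Ideal.jacobson ⊥ := HenselianRing.jac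
    have := isLocalHom_of_le_jacobson_bot J (hJI.trans hI)
    have hunit : IsUnit (F.derivative.eval y) := hy'.of_map
    obtain ⟨x, hx, hxy⟩ := HenselianRing.is_henselian F hF y (hJI hy) (hunit.map _)
    refine ⟨x, hx, Ideal.mem_of_dvd J
      (associated_eval_sub_eval_of_sub_mem hI F hxy hunit).symm.dvd ?_⟩
    rw [hx.eq_zero, zero_sub]
    exact J.neg_mem hy

end HenselianPair

section Lifting

open Polynomial

variable {R A S : Type*} [CommRing R] [CommRing A] [CommRing S] [Algebra R A] [Algebra R S]
  {J : Ideal A} [HenselianRing A J]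

lemma exists_hasMap_of_hasMap_quotient (P : StandardEtalePair R) {x : A ⧸ J} (hx : P.HasMap x) :
    ∃ a : A, P.HasMap a ∧ Ideal.Quotient.mk J a = x := by
  obtain ⟨y, rfl⟩ := Ideal.Quotient.mk_surjective x
  have := isLocalHom_of_le_jacobson_bot J HenselianRing.jac
  have aeval_mk (z : A) (q : R[X]) :
      aeval (Ideal.Quotient.mk J z) q = Ideal.Quotient.mk J (aeval z q) :=
    aeval_algHom_apply (Ideal.Quotient.mkₐ R J) z q
  have hroot : aeval y P.f ∈ J := by
    rw [← Ideal.Quotient.eq_zero_iff_mem, ← aeval_mk, hx.1]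
  have hsimple := hx.isUnit_derivative_f
  rw [aeval_mk] at hsimple
  obtain ⟨a, ha, hay⟩ := HenselianRing.is_henselian (P.f.map (algebraMap R A)) (P.monic_f.map _) y
    (by rwa [eval_map_algebraMap])
    (by rwa [derivative_map, eval_map_algebraMap])
  have hmk : Ideal.Quotient.mk J a = Ideal.Quotient.mk J y := Ideal.Quotient.eq.mpr hay
  have hg : IsUnit (aeval a P.g) := by
    refine IsUnit.of_map (Ideal.Quotient.mk J) _ ?_
    rw [← aeval_mk, hmk]
    exact hx.2
  exact ⟨a, ⟨by rw [← eval_map_algebraMap, ha.eq_zero], hg⟩, hmk⟩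

lemma exists_lift_of_isStandardEtale [Algebra.IsStandardEtale R S] (f : S →ₐ[R] A ⧸ J) :
    ∃ g : S →ₐ[R] A, (Ideal.Quotient.mkₐ R J).comp g = f := by
  obtain ⟨P⟩ := Algebra.IsStandardEtale.nonempty_standardEtalePresentation (R := R) (S := S)
  obtain ⟨a, ha, hmk⟩ := exists_hasMap_of_hasMap_quotient P.P (P.hasMap.map f)
  refine ⟨(P.P.lift a ha).comp P.equivRing.toAlgHom, P.hom_ext ?_⟩
  simp [hmk]

lemma exists_lift_of_isStandardEtale_of_comp_eq {B : Type*} [CommRing B] [Algebra R B] [Algebra B S]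
    [IsScalarTower R B S] [Algebra.IsStandardEtale B S] (f : S →ₐ[R] A ⧸ J) (φ : B →ₐ[R] A)
    (hφ : (Ideal.Quotient.mkₐ R J).comp φ = f.comp (IsScalarTower.toAlgHom R B S)) :
    ∃ g : S →ₐ[R] A, (Ideal.Quotient.mkₐ R J).comp g = f := by
  algebraize [φ.toRingHom]
  let fB : S →ₐ[B] A ⧸ J := { f with commutes' b := (DFunLike.congr_fun hφ b).symm }
  obtain ⟨g, hg⟩ := exists_lift_of_isStandardEtale fB
  exact ⟨g.restrictScalars R, AlgHom.ext fun s ↦ DFunLike.congr_fun hg s⟩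

end Lifting

lemma exists_mvPolynomial_lift {R A B σ : Type*} [CommSemiring R] [CommSemiring A] [CommSemiring B]
    [Algebra R A] [Algebra R B] {π : A →ₐ[R] B} (hπ : Function.Surjective π)
    (f : MvPolynomial σ R →ₐ[R] B) : ∃ g : MvPolynomial σ R →ₐ[R] A, π.comp g = f := by
  choose a ha using fun i ↦ hπ (f (MvPolynomial.X i))
  exact ⟨MvPolynomial.aeval a, MvPolynomial.algHom_ext fun i ↦ by simp [ha]⟩

theorem smooth_lift_of_henselian_general {A A' C : Type*} [CommRing A] [CommRing A'] [Algebra A A']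
    (J : Ideal A') [HenselianRing A' J] [CommRing C] [Algebra A C] [Algebra.FinitePresentation A C]
    (p : Ideal C) [p.IsPrime] [Algebra.IsSmoothAt A p]
    (f : C →ₐ[A] A' ⧸ J) (hf : ∀ c ∉ p, IsUnit (f c)) :
    ∃ g : C →ₐ[A] A', (Ideal.Quotient.mkₐ A J).comp g = f := by
  obtain ⟨s, hs, n, _, _, _⟩ :=
    Algebra.IsSmoothAt.exists_isStandardEtale_mvPolynomial (R := A) (p := p)
  let fs : Localization.Away s →ₐ[A] A' ⧸ J := IsLocalization.Away.liftAlgHom s (hf s hs)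
  obtain ⟨φ, hφ⟩ := exists_mvPolynomial_lift (Ideal.Quotient.mkₐ_surjective A J)
    (fs.comp (IsScalarTower.toAlgHom A (MvPolynomial (Fin n) A) (Localization.Away s)))
  obtain ⟨g, hg⟩ := exists_lift_of_isStandardEtale_of_comp_eq fs φ hφ
  refine ⟨g.comp (IsScalarTower.toAlgHom A C (Localization.Away s)), ?_⟩
  rw [← AlgHom.comp_assoc, hg]
  ext c
  simp [fs]

lemma isLocalRing_quotient_of_ne_top {A : Type*} [CommRing A] [IsLocalRing A] {J : Ideal A}
    (hJ : J ≠ ⊤) : IsLocalRing (A ⧸ J) :=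
  have : Nontrivial (A ⧸ J) := Ideal.Quotient.nontrivial_iff.mpr hJ
  .of_surjective' (Ideal.Quotient.mk J) Ideal.Quotient.mk_surjective

/-- Let `A` be a commutative ring, `(A', m')` a Henselian local ring which is an
`A`-algebra, `J ⊆ m'` an ideal and `C` a smooth `A`-algebra.  Then every `A`-algebra
morphism `C → A'/J` lifts to an `A`-algebra morphism `C → A'`: composing the lift with
the projection `A' → A'/J` recovers the given morphism. -/
theorem smooth_lift_of_henselian {A A' C : Type u} [CommRing A] [CommRing A']
    [IsLocalRing A'] [HenselianLocalRing A'] [Algebra A A']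
    (J : Ideal A') (hJ : J ≤ IsLocalRing.maximalIdeal A')
    [CommRing C] [Algebra A C] [Algebra.Smooth A C]
    (f : C →ₐ[A] A' ⧸ J) :
    ∃ g : C →ₐ[A] A', (Ideal.Quotient.mkₐ A J).comp g = f := by
  have : HenselianRing A' J := henselianRing_of_le hJ
  have : IsLocalRing (A' ⧸ J) := isLocalRing_quotient_of_ne_top
    (ne_top_of_le_ne_top (IsLocalRing.maximalIdeal.isMaximal A').ne_top hJ)
  let p : PrimeSpectrum C := (IsLocalRing.closedPoint (A' ⧸ J)).comap f.toRingHom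
  have : Algebra.IsSmoothAt A p.asIdeal := Algebra.smoothLocus_eq_univ.ge (Set.mem_univ p)
  exact smooth_lift_of_henselian_general J p.asIdeal f fun _ hc ↦
    IsLocalRing.notMem_maximalIdeal.mp hc
end
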